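/- arXiv:2412.02848 — 4 statements merged into one kernel-verified Lean document; each statement's English description precedes it below -/
import Mathlib

section
/- Let (Z,d,ν) be a complete metric measure space with ν a doubling measure, let 0<θ<1 and 1<p<∞, and let E ⊂ Z be a closed set such that Z∖E is bounded and nonempty. If Z∖E satisfies a (θ,p)-fractional Hardy inequality in (Z,d,ν), then there exists a compact set Z₀ ⊂ Z such that Z∖E = Z₀∖E, the restricted measure ν|_{Z₀} is doubling on the metric space (Z₀, d|_{Z₀×Z₀}), and the open subset Z₀∖E of Z₀ satisfies a (θ,p)-fractional Hardy inequality in the metric measure space (Z₀, d|_{Z₀×Z₀}, ν|_{Z₀}) (with all distances, balls and integrals taken in Z₀). -/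
open MeasureTheory Metric Set ENNReal

/-- `ν` is a doubling measure with doubling constant `Cν`:
`0 < ν(B(x,2r)) ≤ Cν · ν(B(x,r)) < ∞` for all `x` and `r > 0`. -/
def IsDoublingWith {Z : Type*} [PseudoMetricSpace Z] [MeasurableSpace Z]
    (ν : Measure Z) (Cν : ℝ) : Prop :=
  ∀ (x : Z) (r : ℝ), 0 < r →
    0 < ν (ball x (2 * r)) ∧
    ν (ball x (2 * r)) ≤ ENNReal.ofReal Cν * ν (ball x r) ∧
    ν (ball x r) < ⊤

/-- The open set `Ω` satisfies the `(θ,p)`-fractional Hardy inequality with constant `C`: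
for all Lipschitz `u : Z → ℝ` with compact support contained in `Ω`,
`∫_Ω |u(x)|^p / d(x,Ωᶜ)^{θp} dν ≤ C ∫_Z ∫_Z |u(x)-u(y)|^p / (d(x,y)^{θp} ν(B(x,d(x,y)))) dν dν`. -/
def FracHardy {Z : Type*} [MetricSpace Z] [MeasurableSpace Z]
    (ν : Measure Z) (Ω : Set Z) (θ p C : ℝ) : Prop :=
  ∀ u : Z → ℝ, (∃ K : NNReal, LipschitzWith K u) → HasCompactSupport u → tsupport u ⊆ Ω →
    ∫⁻ x in Ω, ENNReal.ofReal (|u x| ^ p) / ENNReal.ofReal (infDist x Ωᶜ ^ (θ * p)) ∂ν ≤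
      ENNReal.ofReal C *
        ∫⁻ x, ∫⁻ y, ENNReal.ofReal (|u x - u y| ^ p) /
          (ENNReal.ofReal (dist x y ^ (θ * p)) * ν (ball x (dist x y))) ∂ν ∂ν

/-!
Write `Ω = Z ∖ E` and let `Z₀` be the closure of the union of the successive thickenings of `Ω` by
`r, r/2, r/4, …`. Every point of `Z₀` is within a fixed multiple of `r/2ⁿ` of a point of the `n`-th
set, around which a ball of radius `r/2ⁿ` is added at the next step. Hence every ball of bounded
radius centred in `Z₀` contains a ball of comparable radius inside `Z₀`, and restricting `ν` to `Z₀`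
keeps it doubling.

For the Hardy inequality, extend a test function on `Z₀` by zero and bound its energy on `Z` by its
energy on `Z₀`. Since `Ω` lies at distance at least `r` from `Z ∖ Z₀`, integrating the kernel over
dyadic annuli bounds the energy involving `Z ∖ Z₀` by a multiple of the `Lᵖ` norm to the power `p`.
That norm is in turn controlled by the energy on `Z₀`, because the function vanishes on `Z₀ ∖ Ω`,
which has positive measure for a suitable `r` unless `Z₀ = Z`.
-/

open scoped NNReal

section Corkscrew

variable {X : Type*} [PseudoMetricSpace X]

/-- The interior corkscrew condition up to scale `R`: every ball `B(x, r)` centred in `S` with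
`r ≤ R` contains a ball of the comparable radius `c * r` lying in `S`. It makes the restriction of
a doubling measure to `S` doubling. -/
def InteriorCorkscrew (S : Set X) (c R : ℝ) : Prop :=
  ∀ x ∈ S, ∀ r, 0 < r → r ≤ R → ∃ z, ball z (c * r) ⊆ ball x r ∩ S

lemma InteriorCorkscrew.exists_ball_subset_subset_ball {S : Set X} {c R : ℝ}
    (hS : InteriorCorkscrew S c R) (hc : 0 < c) (hR : 0 < R) (hbdd : Bornology.IsBounded S) :
    ∃ n : ℕ, ∀ x ∈ S, ∀ r, 0 < r → ∃ z, ∃ ρ > 0,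
      ball z ρ ⊆ ball x r ∩ S ∧ ball x (2 * r) ∩ S ⊆ ball z (2 ^ n * ρ) := by
  obtain ⟨D, hD⟩ := isBounded_iff.1 hbdd
  obtain ⟨n, hn⟩ := pow_unbounded_of_one_lt (max 3 (D / R + 1) / c) one_lt_two
  rw [div_lt_iff₀ hc, max_lt_iff] at hn
  refine ⟨n, fun x hx r hr => ?_⟩
  have ht : 0 < min r R := lt_min hr hR
  obtain ⟨z, hz⟩ := hS x hx _ ht (min_le_right r R)
  have hxz : dist x z < min r R := by
    simpa only [mem_ball, dist_comm] using (hz (mem_ball_self (by positivity))).1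
  refine ⟨z, c * min r R, by positivity,
    hz.trans (inter_subset_inter_left _ (ball_subset_ball (min_le_left r R))), ?_⟩
  rintro y ⟨hyx, hyS⟩
  rw [mem_ball] at hyx ⊢
  have hyz := dist_triangle y x z
  rw [← mul_assoc]
  rcases min_cases r R with ⟨hmin, _⟩ | ⟨hmin, _⟩ <;> rw [hmin] at hxz ⊢
  · nlinarith
  · have hDR : D + R < 2 ^ n * c * R := by
      have := mul_lt_mul_of_pos_right hn.2 hR
      rwa [add_mul, div_mul_cancel₀ D hR.ne', one_mul] at this
    linarith [hD hyS hx]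

/-- Successive thickenings of `U` by `r, r/2, r/4, …`. The ball about a point of the `n`-th set
that is added at the next step is what gives the union the interior corkscrew condition. -/
def dyadicThickening (r : ℝ) (U : Set X) : ℕ → Set X
  | 0 => U
  | n + 1 => thickening (r / 2 ^ n) (dyadicThickening r U n)

variable {r : ℝ} {U : Set X}

lemma dyadicThickening_mono (hr : 0 < r) : Monotone (dyadicThickening r U) :=
  monotone_nat_of_le_succ fun _ => self_subset_thickening (by positivity) _

lemma exists_mem_dyadicThickening_dist_le (n k : ℕ) {x : X}
    (hx : x ∈ dyadicThickening r U (n + k)) :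
    ∃ z ∈ dyadicThickening r U n, dist x z ≤ 2 * r / 2 ^ n - 2 * r / 2 ^ (n + k) := by
  induction k generalizing x with
  | zero => exact ⟨x, hx, by simp⟩
  | succ k ih =>
    obtain ⟨y, hy, hxy⟩ : ∃ y ∈ dyadicThickening r U (n + k), dist x y < r / 2 ^ (n + k) :=
      mem_thickening_iff.1 hx
    obtain ⟨z, hz, hyz⟩ := ih hy
    refine ⟨z, hz, ?_⟩
    have hhalf : 2 * r / 2 ^ (n + (k + 1)) = r / 2 ^ (n + k) := by
      rw [← add_assoc, pow_succ', mul_div_mul_left _ _ two_ne_zero]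
    have htwice : 2 * r / 2 ^ (n + k) = r / 2 ^ (n + k) + r / 2 ^ (n + k) := by ring
    linarith [dist_triangle x y z]

/-- The closure of the union of all the dyadic thickenings of `U`: a closed set between the
`r`-thickening of `U` and the closure of the `2r`-thickening, with the interior corkscrew
condition. -/
def dyadicHull (r : ℝ) (U : Set X) : Set X :=
  closure (⋃ n, dyadicThickening r U n)

lemma thickening_subset_dyadicHull : thickening r U ⊆ dyadicHull r U := by
  have hone : dyadicThickening r U 1 = thickening r U := by
    simp only [dyadicThickening, pow_zero, div_one]
  exact hone ▸ (subset_iUnion (dyadicThickening r U) 1).trans subset_closure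

lemma isBounded_dyadicHull (hr : 0 < r) (hU : Bornology.IsBounded U) :
    Bornology.IsBounded (dyadicHull r U) := by
  refine (hU.thickening (δ := 2 * r)).closure.subset (closure_mono (iUnion_subset fun k x hx => ?_))
  obtain ⟨z, hz, hxz⟩ := exists_mem_dyadicThickening_dist_le 0 k ((zero_add k).symm ▸ hx)
  have hpos : 0 < 2 * r / 2 ^ (0 + k) := by positivity
  rw [pow_zero, div_one] at hxz
  exact mem_thickening_iff.2 ⟨z, hz, by linarith⟩

lemma exists_mem_dyadicThickening_dist_lt (hr : 0 < r) {x : X} (hx : x ∈ dyadicHull r U) (n : ℕ) :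
    ∃ z ∈ dyadicThickening r U n, dist x z < 3 * (r / 2 ^ n) := by
  obtain ⟨y, hy, hxy⟩ := Metric.mem_closure_iff.1 hx (r / 2 ^ n) (by positivity)
  obtain ⟨k, hyk⟩ := mem_iUnion.1 hy
  obtain ⟨z, hz, hyz⟩ := exists_mem_dyadicThickening_dist_le n k
    (dyadicThickening_mono hr (Nat.le_add_left k n) hyk)
  have hpos : 0 < 2 * r / 2 ^ (n + k) := by positivity
  refine ⟨z, hz, ?_⟩
  rw [mul_div_assoc] at hyz
  linarith [dist_triangle x y z]

lemma interiorCorkscrew_dyadicHull (hr : 0 < r) : InteriorCorkscrew (dyadicHull r U) (1 / 8) r := by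
  intro x hx t ht htr
  obtain ⟨n, hnt, htn⟩ := exists_nat_pow_near_of_lt_one (div_pos ht hr) ((div_le_one hr).2 htr)
    (y := (1 / 2 : ℝ)) (by norm_num) (by norm_num)
  rw [lt_div_iff₀ hr] at hnt
  rw [div_le_iff₀ hr] at htn
  set ρ := r / 2 ^ (n + 3) with hρ
  have hρ_lt : 4 * ρ < t := by
    have : (1 / 2) ^ (n + 1) * r = 4 * ρ := by
      rw [hρ, one_div_pow, pow_add, pow_add]
      field
    linarith
  have ht_le : t ≤ 8 * ρ := by
    have : (1 / 2) ^ n * r = 8 * ρ := by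
      rw [hρ, one_div_pow, pow_add]
      field
    linarith
  obtain ⟨z, hz, hxz⟩ := exists_mem_dyadicThickening_dist_lt hr hx (n + 3)
  refine ⟨z, subset_inter (ball_subset_ball' (by linarith [dist_comm z x])) ?_⟩
  calc ball z (1 / 8 * t) ⊆ ball z ρ := ball_subset_ball (by linarith)
    _ ⊆ dyadicThickening r U (n + 3 + 1) := ball_subset_thickening hz _
    _ ⊆ dyadicHull r U := (subset_iUnion _ _).trans subset_closure

end Corkscrew

lemma exists_seq_pairwise_le_dist_of_not_totallyBounded {X : Type*} [PseudoMetricSpace X]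
    {S : Set X} (hS : ¬ TotallyBounded S) :
    ∃ ε > 0, ∃ f : ℕ → X, (∀ n, f n ∈ S) ∧ Pairwise fun m n => ε ≤ dist (f m) (f n) := by
  rw [Metric.totallyBounded_iff] at hS
  push Not at hS
  obtain ⟨ε, hε, hcover⟩ := hS
  have : Std.Symm fun x y : X => ε ≤ dist x y := ⟨fun x y hxy => by rwa [dist_comm]⟩
  refine ⟨ε, hε, exists_seq_of_forall_finset_exists' (· ∈ S) (fun x y => ε ≤ dist x y)
    fun t _ => ?_⟩
  obtain ⟨y, hyS, hy⟩ := Set.not_subset.1 (hcover t t.finite_toSet)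
  refine ⟨y, hyS, fun x hx => ?_⟩
  simp only [mem_iUnion, mem_ball, not_exists, not_lt] at hy
  simpa only [dist_comm] using hy x hx

section Doubling

variable {X : Type*} [PseudoMetricSpace X] [MeasurableSpace X] {ν : Measure X} {C : ℝ}

namespace IsDoublingWith

lemma measure_ball_pos (h : IsDoublingWith ν C) (x : X) {r : ℝ} (hr : 0 < r) :
    0 < ν (ball x r) := by
  simpa only [mul_div_cancel₀ r two_ne_zero] using (h x (r / 2) (half_pos hr)).1

lemma measure_ball_lt_top (h : IsDoublingWith ν C) (x : X) (r : ℝ) : ν (ball x r) < ∞ := by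
  rcases le_or_gt r 0 with hr | hr
  · simp [ball_eq_empty.2 hr]
  · exact (h x r hr).2.2

lemma isLocallyFiniteMeasure (h : IsDoublingWith ν C) : IsLocallyFiniteMeasure ν :=
  ⟨fun x => ⟨ball x 1, ball_mem_nhds x one_pos, h.measure_ball_lt_top x 1⟩⟩

lemma measure_lt_top_of_isBounded (h : IsDoublingWith ν C) {S : Set X}
    (hS : Bornology.IsBounded S) : ν S < ∞ := by
  rcases S.eq_empty_or_nonempty with rfl | ⟨x, -⟩
  · simp
  · obtain ⟨r, hSr⟩ := hS.subset_ball x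
    exact (measure_mono hSr).trans_lt (h.measure_ball_lt_top x r)

lemma one_le [Nonempty X] (h : IsDoublingWith ν C) : 1 ≤ C := by
  obtain ⟨x⟩ := ‹Nonempty X›
  by_contra! hC
  have hball : ν (ball x (2 * 1)) ≤ ENNReal.ofReal C * ν (ball x (2 * 1)) :=
    (h x 1 one_pos).2.1.trans <| by
      gcongr
      norm_num
  have hlt : ENNReal.ofReal C * ν (ball x (2 * 1)) < 1 * ν (ball x (2 * 1)) :=
    ENNReal.mul_lt_mul_left (h x 1 one_pos).1.ne' (h.measure_ball_lt_top x _).ne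
      (ENNReal.ofReal_lt_one.2 hC)
  exact hball.not_gt (by simpa only [one_mul] using hlt)

lemma measure_ball_two_pow_mul_le (h : IsDoublingWith ν C) (x : X) {r : ℝ} (hr : 0 < r) (n : ℕ) :
    ν (ball x (2 ^ n * r)) ≤ ENNReal.ofReal C ^ n * ν (ball x r) := by
  induction n with
  | zero => simp
  | succ n ih =>
    calc ν (ball x (2 ^ (n + 1) * r)) = ν (ball x (2 * (2 ^ n * r))) := by rw [pow_succ', mul_assoc]
      _ ≤ ENNReal.ofReal C * ν (ball x (2 ^ n * r)) := (h x _ (by positivity)).2.1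
      _ ≤ ENNReal.ofReal C * (ENNReal.ofReal C ^ n * ν (ball x r)) := by gcongr
      _ = ENNReal.ofReal C ^ (n + 1) * ν (ball x r) := by rw [pow_succ', mul_assoc]

lemma exists_pos_le_measure_ball (h : IsDoublingWith ν C) {S : Set X}
    (hS : Bornology.IsBounded S) {r : ℝ} (hr : 0 < r) :
    ∃ m > 0, ∀ x ∈ S, m ≤ ν (ball x r) := by
  rcases S.eq_empty_or_nonempty with rfl | ⟨x₀, -⟩
  · exact ⟨1, one_pos, by simp⟩
  obtain ⟨R, hR⟩ := hS.subset_closedBall x₀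
  obtain ⟨n, hn⟩ := pow_unbounded_of_one_lt ((1 + R) / r) one_lt_two
  rw [div_lt_iff₀ hr] at hn
  refine ⟨ν (ball x₀ 1) / ENNReal.ofReal C ^ n,
    ENNReal.div_pos (h.measure_ball_pos x₀ one_pos).ne' (by finiteness), fun x hx => ?_⟩
  have hx₀x : dist x₀ x ≤ R := mem_closedBall'.1 (hR hx)
  refine ENNReal.div_le_of_le_mul' ?_
  exact (measure_mono (ball_subset_ball' (by linarith))).trans
    (h.measure_ball_two_pow_mul_le x hr n)

end IsDoublingWith

section Proper

variable [OpensMeasurableSpace X]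

-- Disjoint balls of equal radius centred in a bounded set have measure bounded below, while their
-- union has finite measure.
lemma IsDoublingWith.totallyBounded (h : IsDoublingWith ν C) {S : Set X}
    (hS : Bornology.IsBounded S) : TotallyBounded S := by
  by_contra hnot
  obtain ⟨ε, hε, f, hfS, hf⟩ := exists_seq_pairwise_le_dist_of_not_totallyBounded hnot
  obtain ⟨m, hm, hmle⟩ := h.exists_pos_le_measure_ball hS (half_pos hε)
  have hdisj : Pairwise (Function.onFun Disjoint fun n => ball (f n) (ε / 2)) :=
    fun i j hij => ball_disjoint_ball (by linarith [hf hij])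
  have hunion : (⋃ n, ball (f n) (ε / 2)) ⊆ thickening (ε / 2) S :=
    iUnion_subset fun n => ball_subset_thickening (hfS n) _
  have hfinite := Measure.finite_const_le_meas_of_disjoint_iUnion ν hm
    (fun _ => measurableSet_ball) hdisj
    ((measure_mono hunion).trans_lt (h.measure_lt_top_of_isBounded hS.thickening)).ne
  exact Set.infinite_univ (hfinite.subset fun n _ => hmle _ (hfS n))

lemma IsDoublingWith.properSpace [CompleteSpace X] (h : IsDoublingWith ν C) : ProperSpace X :=
  ⟨fun _ _ => (h.totallyBounded isBounded_closedBall).isCompact_of_isClosed isClosed_closedBall⟩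

end Proper

lemma comap_subtype_val_ball {S : Set X} (hS : MeasurableSet S) (x : S) (r : ℝ) :
    ν.comap (Subtype.val : S → X) (ball x r) = ν (ball (x : X) r ∩ S) := by
  rw [comap_subtype_coe_apply hS, inter_comm, ← Subtype.image_preimage_coe]
  rfl

lemma IsDoublingWith.comap_subtype_val (h : IsDoublingWith ν C) {S : Set X}
    (hSm : MeasurableSet S) (hbdd : Bornology.IsBounded S) {c R : ℝ}
    (hS : InteriorCorkscrew S c R) (hc : 0 < c) (hR : 0 < R) :
    ∃ n : ℕ, IsDoublingWith (ν.comap (Subtype.val : S → X)) (C ^ n) := by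
  obtain ⟨n, hn⟩ := hS.exists_ball_subset_subset_ball hc hR hbdd
  refine ⟨n, fun x r hr => ?_⟩
  simp only [comap_subtype_val_ball hSm]
  refine ⟨?_, ?_, (measure_mono inter_subset_left).trans_lt (h.measure_ball_lt_top _ _)⟩
  · obtain ⟨z, ρ, hρ, hsub, -⟩ := hn x x.2 (2 * r) (by positivity)
    exact (h.measure_ball_pos z hρ).trans_le (measure_mono hsub)
  · obtain ⟨z, ρ, hρ, hsub, hsup⟩ := hn x x.2 r hr
    have : Nonempty X := ⟨x⟩
    calc ν (ball (x : X) (2 * r) ∩ S) ≤ ν (ball z (2 ^ n * ρ)) := measure_mono hsup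
      _ ≤ ENNReal.ofReal C ^ n * ν (ball z ρ) := h.measure_ball_two_pow_mul_le z hρ n
      _ ≤ ENNReal.ofReal (C ^ n) * ν (ball (x : X) r ∩ S) := by
        rw [ENNReal.ofReal_pow (zero_le_one.trans h.one_le)]
        gcongr

lemma IsDoublingWith.exists_thickening_eq_univ_or_measure_diff_ne_zero (h : IsDoublingWith ν C)
    {Ω : Set X} (hΩ : Ω.Nonempty) :
    ∃ r > 0, thickening r Ω = univ ∨ ν (thickening r Ω \ Ω) ≠ 0 := by
  by_contra! hcon
  have hcover : Ωᶜ ⊆ ⋃ n : ℕ, thickening (n + 1 : ℝ) Ω \ Ω := by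
    intro y hy
    obtain ⟨x, hx⟩ := hΩ
    obtain ⟨n, hn⟩ := exists_nat_gt (dist y x)
    exact mem_iUnion.2 ⟨n, mem_thickening_iff.2 ⟨x, hx, by linarith⟩, hy⟩
  have hnull : ν Ωᶜ = 0 := measure_mono_null hcover <| measure_iUnion_null fun n =>
    (hcon (n + 1) (by positivity)).2
  obtain ⟨y, hy⟩ := (ne_univ_iff_exists_notMem _).1 (hcon 1 one_pos).1
  have hball : ball y 1 ⊆ Ωᶜ := fun z hz hzΩ =>
    hy (mem_thickening_iff.2 ⟨z, hzΩ, mem_ball'.1 hz⟩)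
  exact (h.measure_ball_pos y one_pos).ne' (measure_mono_null hball hnull)

end Doubling
section Energy

variable {X : Type*} [PseudoMetricSpace X] [MeasurableSpace X]

/-- The kernel `1 / (d(x, y) ^ s * ν(B(x, d(x, y))))`. For `s ≠ 0` its value on the diagonal is
`∞`, which is harmless because it is always multiplied by a power of `|u x - u y|`. -/
noncomputable def gagliardoKernel (ν : Measure X) (s : ℝ) (x y : X) : ℝ≥0∞ :=
  (ENNReal.ofReal (dist x y ^ s) * ν (ball x (dist x y)))⁻¹

/-- The integrand of the fractional energy of `u`, with the exponents of `|u x - u y|` and of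
`d(x, y)` decoupled: the fractional Hardy inequality uses `s = θ * p`. -/
noncomputable def gagliardoIntegrand (ν : Measure X) (s p : ℝ) (u : X → ℝ) (x y : X) : ℝ≥0∞ :=
  ENNReal.ofReal (|u x - u y| ^ p) * gagliardoKernel ν s x y

/-- The fractional energy of `u` due to the interaction of `A` with `B`, that is, the integral of
`gagliardoIntegrand` over `A × B`. -/
noncomputable def gagliardoEnergy (ν : Measure X) (s p : ℝ) (u : X → ℝ) (A B : Set X) : ℝ≥0∞ :=
  ∫⁻ x in A, ∫⁻ y in B, gagliardoIntegrand ν s p u x y ∂ν ∂ν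

variable {ν : Measure X} {C s p r : ℝ} {u : X → ℝ}

section Symmetry

lemma gagliardoKernel_le_mul_swap (h : IsDoublingWith ν C) (x y : X) :
    gagliardoKernel ν s x y ≤ ENNReal.ofReal C * gagliardoKernel ν s y x := by
  have : Nonempty X := ⟨x⟩
  have hC : ENNReal.ofReal C ≠ 0 := (ENNReal.ofReal_pos.2 (one_pos.trans_le h.one_le)).ne'
  have hball : ν (ball y (dist x y)) ≤ ENNReal.ofReal C * ν (ball x (dist x y)) := by
    rcases (dist_nonneg (x := x) (y := y)).eq_or_lt with hxy | hxy
    · simp [← hxy]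
    · exact (measure_mono (ball_subset_ball' (by linarith [dist_comm x y]))).trans (h x _ hxy).2.1
  rw [gagliardoKernel, gagliardoKernel, dist_comm y x]
  calc (ENNReal.ofReal (dist x y ^ s) * ν (ball x (dist x y)))⁻¹
      = ENNReal.ofReal C *
          (ENNReal.ofReal C * (ENNReal.ofReal (dist x y ^ s) * ν (ball x (dist x y))))⁻¹ := by
        rw [ENNReal.mul_inv (.inl hC) (.inl ofReal_ne_top), ← mul_assoc,
          ENNReal.mul_inv_cancel hC ofReal_ne_top, one_mul]
    _ ≤ ENNReal.ofReal C * (ENNReal.ofReal (dist x y ^ s) * ν (ball y (dist x y)))⁻¹ := by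
        rw [mul_left_comm]
        gcongr

lemma gagliardoIntegrand_le_mul_swap (h : IsDoublingWith ν C) (x y : X) :
    gagliardoIntegrand ν s p u x y ≤ ENNReal.ofReal C * gagliardoIntegrand ν s p u y x := by
  rw [gagliardoIntegrand, gagliardoIntegrand, abs_sub_comm (u y), mul_left_comm]
  gcongr
  exact gagliardoKernel_le_mul_swap h x y

variable [OpensMeasurableSpace X] [SecondCountableTopology X]

lemma measurable_gagliardoKernel [SFinite ν] :
    Measurable (Function.uncurry (gagliardoKernel ν s)) := by
  have hdist : Measurable fun q : X × X => dist q.1 q.2 := by fun_prop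
  have hball : MeasurableSet {w : (X × X) × X | dist w.2 w.1.1 < dist w.1.1 w.1.2} :=
    (isOpen_lt (by fun_prop) (by fun_prop)).measurableSet
  exact ((hdist.pow_const s).ennreal_ofReal.mul (measurable_measure_prodMk_left hball)).inv

lemma measurable_gagliardoIntegrand [SFinite ν] (hu : Measurable u) :
    Measurable (Function.uncurry (gagliardoIntegrand ν s p u)) := by
  have hdiff : Measurable fun q : X × X => |u q.1 - u q.2| := by fun_prop
  exact (hdiff.pow_const p).ennreal_ofReal.mul measurable_gagliardoKernel

lemma gagliardoEnergy_le_mul_swap (h : IsDoublingWith ν C) (hu : Measurable u) (A B : Set X) :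
    gagliardoEnergy ν s p u A B ≤ ENNReal.ofReal C * gagliardoEnergy ν s p u B A := by
  have := h.isLocallyFiniteMeasure
  have hG := measurable_gagliardoIntegrand (ν := ν) (s := s) (p := p) hu
  calc ∫⁻ x in A, ∫⁻ y in B, gagliardoIntegrand ν s p u x y ∂ν ∂ν
      ≤ ∫⁻ x in A, ∫⁻ y in B, ENNReal.ofReal C * gagliardoIntegrand ν s p u y x ∂ν ∂ν :=
        lintegral_mono fun x => lintegral_mono fun y => gagliardoIntegrand_le_mul_swap h x y
    _ = ENNReal.ofReal C * ∫⁻ x in A, ∫⁻ y in B, gagliardoIntegrand ν s p u y x ∂ν ∂ν := by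
        simp only [lintegral_const_mul' _ _ ofReal_ne_top]
    _ = ENNReal.ofReal C * gagliardoEnergy ν s p u B A := by
        rw [lintegral_lintegral_swap (f := fun x y => gagliardoIntegrand ν s p u y x)
          (hG.comp measurable_swap).aemeasurable, gagliardoEnergy]

lemma gagliardoEnergy_univ_univ_le (h : IsDoublingWith ν C) (hu : Measurable u) {S : Set X}
    (hS : MeasurableSet S) :
    gagliardoEnergy ν s p u univ univ ≤
      gagliardoEnergy ν s p u S S + (ENNReal.ofReal C + 1) * gagliardoEnergy ν s p u univ Sᶜ := by
  have := h.isLocallyFiniteMeasure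
  have hmeas : Measurable fun x => ∫⁻ y in S, gagliardoIntegrand ν s p u x y ∂ν :=
    (measurable_gagliardoIntegrand hu).lintegral_prod_right'
  have hswap : gagliardoEnergy ν s p u Sᶜ S ≤
      ENNReal.ofReal C * gagliardoEnergy ν s p u univ Sᶜ :=
    (gagliardoEnergy_le_mul_swap h hu _ _).trans <| by
      gcongr
      exact lintegral_mono_set (subset_univ S)
  calc gagliardoEnergy ν s p u univ univ
      = gagliardoEnergy ν s p u univ S + gagliardoEnergy ν s p u univ Sᶜ := by
        simp only [gagliardoEnergy, Measure.restrict_univ]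
        rw [← lintegral_add_left hmeas]
        simp only [lintegral_add_compl _ hS]
    _ = gagliardoEnergy ν s p u S S + gagliardoEnergy ν s p u Sᶜ S +
          gagliardoEnergy ν s p u univ Sᶜ := by
        simp only [gagliardoEnergy, Measure.restrict_univ]
        rw [lintegral_add_compl _ hS]
    _ ≤ gagliardoEnergy ν s p u S S +
          (ENNReal.ofReal C + 1) * gagliardoEnergy ν s p u univ Sᶜ := by
        rw [add_mul, one_mul, ← add_assoc]
        gcongr

end Symmetry

section Tail

lemma setLIntegral_gagliardoKernel_annulus_le [OpensMeasurableSpace X] (h : IsDoublingWith ν C)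
    (hs : 0 ≤ s) (hr : 0 < r) (x : X) :
    ∫⁻ y in ball x (2 * r) \ ball x r, gagliardoKernel ν s x y ∂ν ≤
      ENNReal.ofReal C * (ENNReal.ofReal (r ^ s))⁻¹ := by
  have hpos := (h.measure_ball_pos x hr).ne'
  have hfin := (h.measure_ball_lt_top x r).ne
  calc ∫⁻ y in ball x (2 * r) \ ball x r, gagliardoKernel ν s x y ∂ν
      ≤ ∫⁻ _ in ball x (2 * r) \ ball x r, (ENNReal.ofReal (r ^ s) * ν (ball x r))⁻¹ ∂ν := by
        refine setLIntegral_mono' (measurableSet_ball.diff measurableSet_ball) fun y hy => ?_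
        have hxy : r ≤ dist x y := not_lt.1 fun hlt => hy.2 (mem_ball'.2 hlt)
        rw [gagliardoKernel]
        gcongr
    _ ≤ (ENNReal.ofReal (r ^ s) * ν (ball x r))⁻¹ * (ENNReal.ofReal C * ν (ball x r)) := by
        rw [setLIntegral_const]
        gcongr
        exact (measure_mono sdiff_subset).trans (h x r hr).2.1
    _ = ENNReal.ofReal C * (ENNReal.ofReal (r ^ s))⁻¹ * ((ν (ball x r))⁻¹ * ν (ball x r)) := by
        rw [ENNReal.mul_inv (.inr hfin) (.inr hpos)]
        ring
    _ = ENNReal.ofReal C * (ENNReal.ofReal (r ^ s))⁻¹ := by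
        rw [ENNReal.inv_mul_cancel hpos hfin, mul_one]

lemma exists_setLIntegral_gagliardoKernel_compl_ball_le [OpensMeasurableSpace X]
    (h : IsDoublingWith ν C) (hs : 0 < s) (hr : 0 < r) :
    ∃ T ≠ ∞, ∀ x, ∫⁻ y in (ball x r)ᶜ, gagliardoKernel ν s x y ∂ν ≤ T := by
  set q := (ENNReal.ofReal (2 ^ s))⁻¹ with hq
  have hq1 : q < 1 := by
    rw [hq, ENNReal.inv_lt_one, ENNReal.one_lt_ofReal]
    exact Real.one_lt_rpow one_lt_two hs
  have hgeom (n : ℕ) :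
      (ENNReal.ofReal ((2 ^ n * r) ^ s))⁻¹ = q ^ n * (ENNReal.ofReal (r ^ s))⁻¹ := by
    have h2 : ((2 : ℝ) ^ n) ^ s = (2 ^ s) ^ n := (Real.rpow_pow_comm zero_le_two s n).symm
    rw [Real.mul_rpow (by positivity) hr.le, h2, ENNReal.ofReal_mul (by positivity),
      ENNReal.ofReal_pow (by positivity), hq, ← ENNReal.inv_pow,
      ENNReal.mul_inv (.inr ofReal_ne_top) (.inl (by finiteness))]
  refine ⟨∑' n : ℕ, ENNReal.ofReal C * (q ^ n * (ENNReal.ofReal (r ^ s))⁻¹), ?_, fun x => ?_⟩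
  · have hrs : ENNReal.ofReal (r ^ s) ≠ 0 := (ENNReal.ofReal_pos.2 (by positivity)).ne'
    have h1q : 1 - q ≠ 0 := (tsub_pos_of_lt hq1).ne'
    rw [ENNReal.tsum_mul_left, ENNReal.tsum_mul_right, ENNReal.tsum_geometric]
    finiteness
  · have hcover : (ball x r)ᶜ ⊆ ⋃ n : ℕ, ball x (2 * (2 ^ n * r)) \ ball x (2 ^ n * r) := by
      intro y hy
      have hy : r ≤ dist y x := not_lt.1 hy
      obtain ⟨n, hn, hn'⟩ := exists_nat_pow_near ((one_le_div hr).2 hy) one_lt_two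
      rw [le_div_iff₀ hr] at hn
      rw [div_lt_iff₀ hr, pow_succ', mul_assoc] at hn'
      exact mem_iUnion.2 ⟨n, hn', not_lt.2 hn⟩
    calc ∫⁻ y in (ball x r)ᶜ, gagliardoKernel ν s x y ∂ν
        ≤ ∑' n : ℕ, ∫⁻ y in ball x (2 * (2 ^ n * r)) \ ball x (2 ^ n * r),
            gagliardoKernel ν s x y ∂ν :=
          (lintegral_mono_set hcover).trans (lintegral_iUnion_le _ _)
      _ ≤ ∑' n : ℕ, ENNReal.ofReal C * (q ^ n * (ENNReal.ofReal (r ^ s))⁻¹) :=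
          ENNReal.tsum_le_tsum fun n => hgeom n ▸
            setLIntegral_gagliardoKernel_annulus_le h hs.le (by positivity) x

lemma gagliardoEnergy_univ_compl_le (hp : p ≠ 0) {S : Set X} (hS : MeasurableSet S) {T : ℝ≥0∞}
    (hT : T ≠ ∞) (hu : ∀ y ∉ S, u y = 0)
    (htail : ∀ x, u x ≠ 0 → ∫⁻ y in Sᶜ, gagliardoKernel ν s x y ∂ν ≤ T) :
    gagliardoEnergy ν s p u univ Sᶜ ≤ T * ∫⁻ x in S, ENNReal.ofReal (|u x| ^ p) ∂ν := by
  have hzero (x : X) (hx : u x = 0) : ENNReal.ofReal (|u x| ^ p) = 0 := by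
    rw [hx, abs_zero, Real.zero_rpow hp, ENNReal.ofReal_zero]
  have hinner (x : X) :
      ∫⁻ y in Sᶜ, gagliardoIntegrand ν s p u x y ∂ν ≤ T * ENNReal.ofReal (|u x| ^ p) :=
    calc ∫⁻ y in Sᶜ, gagliardoIntegrand ν s p u x y ∂ν
        = ENNReal.ofReal (|u x| ^ p) * ∫⁻ y in Sᶜ, gagliardoKernel ν s x y ∂ν := by
          rw [← lintegral_const_mul' _ _ ofReal_ne_top]
          refine setLIntegral_congr_fun hS.compl fun y hy => ?_
          simp only [gagliardoIntegrand, hu y hy, sub_zero]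
      _ ≤ T * ENNReal.ofReal (|u x| ^ p) := by
          by_cases hx : u x = 0
          · simp only [hzero x hx, zero_mul, mul_zero, le_refl]
          · rw [mul_comm]
            gcongr
            exact htail x hx
  rw [gagliardoEnergy, Measure.restrict_univ, ← lintegral_const_mul' _ _ hT,
    setLIntegral_eq_of_support_subset]
  · exact lintegral_mono hinner
  · exact Function.support_subset_iff'.2 fun x hx => by rw [hzero x (hu x hx), mul_zero]

end Tail

section Comparison

lemma IsDoublingWith.exists_pos_le_gagliardoKernel (h : IsDoublingWith ν C) (hs : 0 ≤ s)
    {S : Set X} (hS : Bornology.IsBounded S) :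
    ∃ m > 0, m ≠ ∞ ∧ ∀ x ∈ S, ∀ y ∈ S, m ≤ gagliardoKernel ν s x y := by
  obtain ⟨D, hD⟩ := isBounded_iff.1 hS
  have hfin : ν (thickening D S) ≠ ∞ := (h.measure_lt_top_of_isBounded hS.thickening).ne
  obtain ⟨m, hm, hmlt⟩ := ENNReal.lt_iff_exists_nnreal_btwn.1 <| ENNReal.inv_pos.2 <|
    ENNReal.mul_ne_top (ofReal_ne_top (r := D ^ s)) hfin
  refine ⟨m, hm, coe_ne_top, fun x hx y hy => hmlt.le.trans ?_⟩
  rw [gagliardoKernel]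
  gcongr
  · exact hD hx hy
  · exact (ball_subset_ball (hD hx hy)).trans (ball_subset_thickening hx D)

-- A Poincaré inequality: the kernel is bounded below on `S × N`, where `|u x - u y| = |u x|`.
lemma exists_setLIntegral_rpow_le_gagliardoEnergy (h : IsDoublingWith ν C)
    (hs : 0 ≤ s) {S N : Set X} (hS : MeasurableSet S) (hSb : Bornology.IsBounded S)
    (hN : MeasurableSet N) (hNS : N ⊆ S) (hN0 : ν N ≠ 0) :
    ∃ c ≠ ∞, ∀ u : X → ℝ, (∀ y ∈ N, u y = 0) →
      ∫⁻ x in S, ENNReal.ofReal (|u x| ^ p) ∂ν ≤ c * gagliardoEnergy ν s p u S S := by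
  obtain ⟨m, hm, hmfin, hmle⟩ := h.exists_pos_le_gagliardoKernel hs hSb
  have hNfin : ν N ≠ ∞ := (h.measure_lt_top_of_isBounded (hSb.subset hNS)).ne
  have hmN : m * ν N ≠ 0 := mul_ne_zero hm.ne' hN0
  refine ⟨(m * ν N)⁻¹, ENNReal.inv_ne_top.2 hmN, fun u hu => ?_⟩
  rw [← ENNReal.mul_le_iff_le_inv hmN (by finiteness), ← lintegral_const_mul' _ _ (by finiteness)]
  refine setLIntegral_mono' hS fun x hx => ?_
  calc m * ν N * ENNReal.ofReal (|u x| ^ p) = ∫⁻ _ in N, ENNReal.ofReal (|u x| ^ p) * m ∂ν := by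
        rw [setLIntegral_const]
        ring
    _ ≤ ∫⁻ y in N, gagliardoIntegrand ν s p u x y ∂ν := by
        refine setLIntegral_mono' hN fun y hy => ?_
        rw [gagliardoIntegrand, hu y hy, sub_zero]
        gcongr
        exact hmle x hx y (hNS hy)
    _ ≤ ∫⁻ y in S, gagliardoIntegrand ν s p u x y ∂ν := lintegral_mono_set hNS

lemma exists_gagliardoEnergy_univ_univ_le [OpensMeasurableSpace X] [SecondCountableTopology X]
    (h : IsDoublingWith ν C) (hs : 0 < s) (hp : p ≠ 0) (hr : 0 < r) {Ω S : Set X}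
    (hΩ : MeasurableSet Ω) (hS : MeasurableSet S) (hSb : Bornology.IsBounded S)
    (hΩS : thickening r Ω ⊆ S) (hcase : S = univ ∨ ν (S \ Ω) ≠ 0) :
    ∃ Q ≠ ∞, ∀ u : X → ℝ, Measurable u → (∀ x ∉ Ω, u x = 0) →
      gagliardoEnergy ν s p u univ univ ≤ Q * gagliardoEnergy ν s p u S S := by
  rcases hcase with rfl | hdiff
  · exact ⟨1, one_ne_top, fun u _ _ => (one_mul _).ge⟩
  obtain ⟨T, hT, htail⟩ := exists_setLIntegral_gagliardoKernel_compl_ball_le h hs hr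
  obtain ⟨c, hc, hpoincare⟩ := exists_setLIntegral_rpow_le_gagliardoEnergy (p := p) h hs.le hS hSb
    (hS.diff hΩ) sdiff_subset hdiff
  refine ⟨1 + (ENNReal.ofReal C + 1) * (T * c), by finiteness, fun u hu hu0 => ?_⟩
  have houter : gagliardoEnergy ν s p u univ Sᶜ ≤ T * ∫⁻ x in S, ENNReal.ofReal (|u x| ^ p) ∂ν := by
    refine gagliardoEnergy_univ_compl_le hp hS hT
      (fun y hy => hu0 y fun hyΩ => hy (hΩS (self_subset_thickening hr Ω hyΩ)))
      fun x hx => (lintegral_mono_set ?_).trans (htail x)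
    have hxΩ : x ∈ Ω := not_imp_comm.1 (hu0 x) hx
    exact compl_subset_compl.2 ((ball_subset_thickening hxΩ r).trans hΩS)
  calc gagliardoEnergy ν s p u univ univ
      ≤ gagliardoEnergy ν s p u S S + (ENNReal.ofReal C + 1) * gagliardoEnergy ν s p u univ Sᶜ :=
        gagliardoEnergy_univ_univ_le h hu hS
    _ ≤ gagliardoEnergy ν s p u S S +
          (ENNReal.ofReal C + 1) * (T * (c * gagliardoEnergy ν s p u S S)) := by
        gcongr
        exact houter.trans (by gcongr; exact hpoincare u fun y hy => hu0 y hy.2)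
    _ = (1 + (ENNReal.ofReal C + 1) * (T * c)) * gagliardoEnergy ν s p u S S := by ring

end Comparison

end Energy

/-- The left-hand side of the fractional Hardy inequality, with the exponents of `|u x|` and of the
distance to the complement of `Ω` decoupled. -/
noncomputable def hardyIntegral {X : Type*} [PseudoMetricSpace X] [MeasurableSpace X]
    (ν : Measure X) (Ω : Set X) (s p : ℝ) (u : X → ℝ) : ℝ≥0∞ :=
  ∫⁻ x in Ω, ENNReal.ofReal (|u x| ^ p) / ENNReal.ofReal (infDist x Ωᶜ ^ s) ∂ν

lemma fracHardy_iff {X : Type*} [MetricSpace X] [MeasurableSpace X] {ν : Measure X} {Ω : Set X}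
    {θ p C : ℝ} :
    FracHardy ν Ω θ p C ↔ ∀ u : X → ℝ, (∃ K, LipschitzWith K u) → HasCompactSupport u →
      tsupport u ⊆ Ω → hardyIntegral ν Ω (θ * p) p u ≤
        ENNReal.ofReal C * gagliardoEnergy ν (θ * p) p u univ univ := by
  simp only [FracHardy, hardyIntegral, gagliardoEnergy, gagliardoIntegrand, gagliardoKernel,
    Measure.restrict_univ, div_eq_mul_inv]

section Extension

variable {X : Type*} {S : Set X} {u : S → ℝ}

lemma lipschitzWith_extend_val_zero [PseudoMetricSpace X] {K : ℝ≥0} {B r : ℝ}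
    (hK : LipschitzWith K u) (hB : ∀ x, |u x| ≤ B) (hr : 0 < r)
    (hball : ∀ x, u x ≠ 0 → ball (x : X) r ⊆ S) :
    LipschitzWith (max K (B / r).toNNReal) (Function.extend Subtype.val u 0) := by
  set v : X → ℝ := Function.extend Subtype.val u 0
  have hv (x : S) : v x = u x := Subtype.val_injective.extend_apply _ _ _
  have hv0 (y : X) (hy : y ∉ S) : v y = 0 :=
    Function.extend_apply' _ _ _ fun ⟨x, hx⟩ => hy (hx ▸ x.2)
  have hcross (x : S) (y : X) (hy : y ∉ S) :
      |u x| ≤ (max K (B / r).toNNReal : ℝ≥0) * dist (x : X) y := by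
    by_cases hx : u x = 0
    · rw [hx, abs_zero]
      positivity
    · have hxy : r ≤ dist (x : X) y := not_lt.1 fun hlt => hy (hball x hx (mem_ball'.2 hlt))
      calc |u x| ≤ B / r * r := by rw [div_mul_cancel₀ B hr.ne']; exact hB x
        _ ≤ (max K (B / r).toNNReal : ℝ≥0) * r := by
          gcongr
          exact (Real.le_coe_toNNReal _).trans (NNReal.coe_le_coe.2 (le_max_right _ _))
        _ ≤ (max K (B / r).toNNReal : ℝ≥0) * dist (x : X) y := by gcongr
  refine LipschitzWith.of_dist_le_mul fun x y => ?_
  rw [Real.dist_eq]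
  by_cases hx : x ∈ S <;> by_cases hy : y ∈ S
  · rw [hv ⟨x, hx⟩, hv ⟨y, hy⟩]
    exact (hK.weaken (le_max_left _ _)).dist_le_mul ⟨x, hx⟩ ⟨y, hy⟩
  · rw [hv ⟨x, hx⟩, hv0 y hy, sub_zero]
    exact hcross ⟨x, hx⟩ y hy
  · rw [hv0 x hx, hv ⟨y, hy⟩, zero_sub, abs_neg, dist_comm]
    exact hcross ⟨y, hy⟩ x hx
  · rw [hv0 x hx, hv0 y hy, sub_zero, abs_zero]
    positivity

lemma tsupport_extend_val_zero_subset [TopologicalSpace X] [T2Space X] (hu : HasCompactSupport u) :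
    tsupport (Function.extend Subtype.val u 0) ⊆ Subtype.val '' tsupport u :=
  closure_minimal (Function.support_extend_zero_subset.trans (image_mono (subset_tsupport u)))
    (hu.isCompact.image continuous_subtype_val).isClosed

end Extension

section Comap

variable {X : Type*} [PseudoMetricSpace X] [MeasurableSpace X] {ν : Measure X} {S Ω : Set X}
  {s p : ℝ}

lemma gagliardoEnergy_le_comap_subtype_val (hS : MeasurableSet S) (u : X → ℝ) :
    gagliardoEnergy ν s p u S S ≤
      gagliardoEnergy (ν.comap (Subtype.val : S → X)) s p (u ∘ Subtype.val) univ univ := by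
  simp only [gagliardoEnergy, Measure.restrict_univ, ← lintegral_subtype_comap hS]
  refine lintegral_mono fun x => lintegral_mono fun y => ?_
  simp only [gagliardoIntegrand, gagliardoKernel, comap_subtype_val_ball hS, Function.comp_apply,
    Subtype.dist_eq]
  gcongr
  exact inter_subset_left

-- The distance to `Ωᶜ` can only grow when measured inside `S`, except that it drops to the junk
-- value `0` when `S \ Ω` is empty.
lemma hardyIntegral_comap_subtype_val_le [OpensMeasurableSpace X] (hs : 0 ≤ s)
    (hS : MeasurableSet S) (hΩ : MeasurableSet Ω) (hne : Ωᶜ.Nonempty → (S \ Ω).Nonempty)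
    (u : X → ℝ) :
    hardyIntegral (ν.comap (Subtype.val : S → X)) (Subtype.val ⁻¹' Ω) s p (u ∘ Subtype.val) ≤
      hardyIntegral ν Ω s p u := by
  set F : X → ℝ≥0∞ := fun x => ENNReal.ofReal (|u x| ^ p) / ENNReal.ofReal (infDist x Ωᶜ ^ s)
  have hdist (x : S) : infDist (x : X) Ωᶜ ≤ infDist x (Subtype.val ⁻¹' Ω)ᶜ := by
    rcases Ωᶜ.eq_empty_or_nonempty with hempty | hnonempty
    · rw [hempty, infDist_empty]
      exact infDist_nonneg
    · obtain ⟨z, hzS, hzΩ⟩ := hne hnonempty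
      exact (le_infDist ⟨⟨z, hzS⟩, hzΩ⟩).2 fun _ hy => infDist_le_dist_of_mem hy
  calc hardyIntegral (ν.comap (Subtype.val : S → X)) (Subtype.val ⁻¹' Ω) s p (u ∘ Subtype.val)
      ≤ ∫⁻ x in (Subtype.val ⁻¹' Ω : Set S), F x ∂ν.comap Subtype.val := by
        refine lintegral_mono fun x => ?_
        simp only [F, Function.comp_apply]
        gcongr
        · exact infDist_nonneg
        · exact hdist x
    _ = ∫⁻ x : S, Ω.indicator F x ∂ν.comap Subtype.val :=
        (lintegral_indicator (measurable_subtype_coe hΩ) _).symm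
    _ = ∫⁻ x in S, Ω.indicator F x ∂ν := lintegral_subtype_comap hS _
    _ ≤ ∫⁻ x, Ω.indicator F x ∂ν := setLIntegral_le_lintegral _ _
    _ = hardyIntegral ν Ω s p u := lintegral_indicator hΩ F

end Comap

lemma FracHardy.comap_subtype_val {X : Type*} [MetricSpace X] [MeasurableSpace X]
    [OpensMeasurableSpace X] {ν : Measure X} {Ω S : Set X} {θ p C r : ℝ}
    (hHardy : FracHardy ν Ω θ p C) (hs : 0 ≤ θ * p) (hS : MeasurableSet S) (hΩ : MeasurableSet Ω)
    (hr : 0 < r) (hΩS : thickening r Ω ⊆ S) (hne : Ωᶜ.Nonempty → (S \ Ω).Nonempty) {Q : ℝ≥0∞}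
    (hQ : Q ≠ ∞) (henergy : ∀ u : X → ℝ, Measurable u → (∀ x ∉ Ω, u x = 0) →
      gagliardoEnergy ν (θ * p) p u univ univ ≤ Q * gagliardoEnergy ν (θ * p) p u S S) :
    ∃ C', 1 ≤ C' ∧
      FracHardy (ν.comap (Subtype.val : S → X)) (Subtype.val ⁻¹' Ω) θ p C' := by
  refine ⟨max 1 (ENNReal.ofReal C * Q).toReal, le_max_left _ _, fracHardy_iff.2 ?_⟩
  rintro u ⟨K, hK⟩ hu huΩ
  set v : X → ℝ := Function.extend Subtype.val u 0
  have hvu : v ∘ Subtype.val = u := Function.extend_comp Subtype.val_injective u 0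
  obtain ⟨B, hB⟩ := hu.exists_bound_of_continuous hK.continuous
  have hv : LipschitzWith _ v := lipschitzWith_extend_val_zero hK hB hr fun x hx =>
    (ball_subset_thickening (E := Ω) (huΩ (subset_tsupport u hx)) r).trans hΩS
  have hvsupp : tsupport v ⊆ Subtype.val '' tsupport u := tsupport_extend_val_zero_subset hu
  have hvΩ : tsupport v ⊆ Ω := hvsupp.trans (image_subset_iff.2 huΩ)
  have hvc : HasCompactSupport v :=
    (hu.isCompact.image continuous_subtype_val).of_isClosed_subset (isClosed_tsupport v) hvsupp
  have hv0 (x : X) (hx : x ∉ Ω) : v x = 0 := image_eq_zero_of_notMem_tsupport fun h => hx (hvΩ h)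
  calc hardyIntegral (ν.comap (Subtype.val : S → X)) (Subtype.val ⁻¹' Ω) (θ * p) p u
      ≤ hardyIntegral ν Ω (θ * p) p v := hvu ▸ hardyIntegral_comap_subtype_val_le hs hS hΩ hne v
    _ ≤ ENNReal.ofReal C * gagliardoEnergy ν (θ * p) p v univ univ :=
        fracHardy_iff.1 hHardy v ⟨_, hv⟩ hvc hvΩ
    _ ≤ ENNReal.ofReal C * Q * gagliardoEnergy ν (θ * p) p v S S := by
        rw [mul_assoc]
        gcongr
        exact henergy v hv.continuous.measurable hv0
    _ ≤ ENNReal.ofReal (max 1 (ENNReal.ofReal C * Q).toReal) *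
          gagliardoEnergy (ν.comap (Subtype.val : S → X)) (θ * p) p u univ univ := by
        gcongr
        · exact (ENNReal.ofReal_toReal (by finiteness)).ge.trans
            (ENNReal.ofReal_le_ofReal (le_max_right _ _))
        · exact hvu ▸ gagliardoEnergy_le_comap_subtype_val hS v

theorem fracHardy_localization_general {Z : Type*} [MetricSpace Z] [MeasurableSpace Z]
    [OpensMeasurableSpace Z] [CompleteSpace Z] {ν : Measure Z} {Cν : ℝ}
    (hdoub : IsDoublingWith ν Cν) {θ p : ℝ} (hθ : 0 < θ) (hp : 0 < p) {E : Set Z}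
    (hE : MeasurableSet E) (hbdd : Bornology.IsBounded Eᶜ) (hne : Eᶜ.Nonempty) {C : ℝ}
    (hHardy : FracHardy ν Eᶜ θ p C) :
    ∃ Z₀ : Set Z, IsCompact Z₀ ∧ Eᶜ = Z₀ \ E ∧
      (∃ C' : ℝ, 1 ≤ C' ∧ IsDoublingWith (ν.comap (Subtype.val : Z₀ → Z)) C') ∧
      ∃ C'' : ℝ, 1 ≤ C'' ∧
        FracHardy (ν.comap (Subtype.val : Z₀ → Z)) (Subtype.val ⁻¹' Eᶜ) θ p C'' := by
  have := hdoub.properSpace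
  have : Nonempty Z := hne.to_type
  obtain ⟨r, hr, hcase⟩ := hdoub.exists_thickening_eq_univ_or_measure_diff_ne_zero hne
  set Z₀ := dyadicHull r Eᶜ
  have hZ₀E : thickening r Eᶜ ⊆ Z₀ := thickening_subset_dyadicHull
  have hZ₀b : Bornology.IsBounded Z₀ := isBounded_dyadicHull hr hbdd
  have hZ₀c : IsClosed Z₀ := isClosed_closure
  obtain ⟨n, hn⟩ := hdoub.comap_subtype_val hZ₀c.measurableSet hZ₀b
    (interiorCorkscrew_dyadicHull hr) (by norm_num) hr
  refine ⟨Z₀, isCompact_of_isClosed_isBounded hZ₀c hZ₀b, ?_,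
    ⟨Cν ^ n, one_le_pow₀ hdoub.one_le, hn⟩, ?_⟩
  · rw [sdiff_eq, inter_eq_right.2 ((self_subset_thickening hr _).trans hZ₀E)]
  have hcase : Z₀ = univ ∨ ν (Z₀ \ Eᶜ) ≠ 0 := hcase.imp
    (fun h => univ_subset_iff.1 (h.ge.trans hZ₀E))
    fun h h0 => h (measure_mono_null (sdiff_subset_sdiff_left hZ₀E) h0)
  have hs : 0 < θ * p := mul_pos hθ hp
  obtain ⟨Q, hQ, henergy⟩ := exists_gagliardoEnergy_univ_univ_le hdoub hs hp.ne' hr hE.compl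
    hZ₀c.measurableSet hZ₀b hZ₀E hcase
  refine hHardy.comap_subtype_val hs.le hZ₀c.measurableSet hE.compl hr hZ₀E ?_ hQ henergy
  rintro ⟨x, hx⟩
  rcases hcase with huniv | hdiff
  · exact ⟨x, huniv ▸ mem_univ x, hx⟩
  · exact nonempty_of_measure_ne_zero hdiff

/-- Localization (i): if `Z∖E` is bounded, nonempty and satisfies a `(θ,p)`-fractional
Hardy inequality in the complete doubling space `(Z,d,ν)`, then there is a compact
`Z₀ ⊆ Z` with `Z∖E = Z₀∖E`, such that the restricted measure is doubling on the metric
space `Z₀` and `Z₀∖E` satisfies a `(θ,p)`-fractional Hardy inequality in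
`(Z₀, d|_{Z₀×Z₀}, ν|_{Z₀})`. -/
theorem fracHardy_localization {Z : Type*} [MetricSpace Z] [MeasurableSpace Z]
    [BorelSpace Z] [CompleteSpace Z] (ν : Measure Z) {Cν : ℝ} (hCν : 1 ≤ Cν)
    (hdoub : IsDoublingWith ν Cν)
    (θ p : ℝ) (hθ₀ : 0 < θ) (hθ₁ : θ < 1) (hp : 1 < p)
    (E : Set Z) (hE : IsClosed E) (hbdd : Bornology.IsBounded Eᶜ) (hne : Eᶜ.Nonempty)
    {C : ℝ} (hC : 1 ≤ C) (hHardy : FracHardy ν Eᶜ θ p C) :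
    ∃ Z₀ : Set Z, IsCompact Z₀ ∧ Eᶜ = Z₀ \ E ∧
      (∃ C' : ℝ, 1 ≤ C' ∧
        IsDoublingWith (ν.comap (Subtype.val : Z₀ → Z)) C') ∧
      ∃ C'' : ℝ, 1 ≤ C'' ∧
        FracHardy (ν.comap (Subtype.val : Z₀ → Z))
          ((Subtype.val : Z₀ → Z) ⁻¹' Eᶜ) θ p C'' :=
  fracHardy_localization_general hdoub hθ₀ (one_pos.trans hp) hE.measurableSet hbdd hne hHardy
end

section
/- Let (Z,d,ν) be a metric measure space with ν a doubling measure with constant C_ν, let 0<θ<1 and 1<p<∞, and let z₀ ∈ Z and R > 0. Then there exists a constant C₁ ≥ 1, depending only on C_ν, θ and p, such that for every z ∈ Z with d(z,z₀) ≤ R/2, ∫_{Z ∖ B(z₀,R)} d(z,w)^{−θp} ν(B(z, d(z,w)))^{−1} dν(w) ≤ C₁ R^{−θp}. -/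
/-!
The complement of `B(z, r)` is covered by the dyadic annuli `B(z, 2ᵏ⁺¹r) ∖ B(z, 2ᵏr)`. On the
`k`-th annulus the integrand is at most `(2ᵏr)^{-a} ν(B(z, 2ᵏr))⁻¹`, and doubling bounds the measure
of the annulus by `Cν ν(B(z, 2ᵏr))`; the two ball measures cancel, and what remains is a geometric
series of ratio `2^{-a}`. If `d(z, z₀) ≤ R/2`, then `B(z, R/2) ⊆ B(z₀, R)`, so the bound applies
with `r = R/2`.
-/

open MeasureTheory Metric Set ENNReal

theorem compl_ball_subset_iUnion_annulus {Z : Type*} [PseudoMetricSpace Z] (z : Z) {r b : ℝ}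
    (hr : 0 < r) (hb : 1 < b) :
    (ball z r)ᶜ ⊆ ⋃ k : ℕ, ball z (b ^ (k + 1) * r) \ ball z (b ^ k * r) := by
  intro w hw
  have hrw : r ≤ dist w z := by simpa using hw
  obtain ⟨k, hk_le, hk_lt⟩ := exists_nat_pow_near ((one_le_div hr).2 hrw) hb
  exact mem_iUnion.2 ⟨k, (div_lt_iff₀ hr).1 hk_lt, not_lt.2 ((le_div_iff₀ hr).1 hk_le)⟩

theorem tsum_ofReal_mul_geometric {c q : ℝ} (hc : 0 ≤ c) (hq₀ : 0 ≤ q) (hq₁ : q < 1) :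
    ∑' k : ℕ, ENNReal.ofReal (c * q ^ k) = ENNReal.ofReal (c * (1 - q)⁻¹) := by
  rw [← ENNReal.ofReal_tsum_of_nonneg (fun k ↦ by positivity)
    ((summable_geometric_of_lt_one hq₀ hq₁).mul_left c), tsum_mul_left,
    tsum_geometric_of_lt_one hq₀ hq₁]

theorem two_rpow_neg_lt_one {a : ℝ} (ha : 0 < a) : (2 : ℝ) ^ (-a) < 1 :=
  Real.rpow_lt_one_of_one_lt_of_neg one_lt_two (neg_lt_zero.2 ha)

/-- The kernel `d(z,w)^{-a} ν(B(z,d(z,w)))⁻¹` of the tail integral, where `a` stands for `θp`. Its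
value is `∞` where `d(z,w) = 0`. -/
noncomputable def tailKernel {Z : Type*} [PseudoMetricSpace Z] [MeasurableSpace Z]
    (ν : Measure Z) (a : ℝ) (z w : Z) : ℝ≥0∞ :=
  (ENNReal.ofReal (dist z w ^ a) * ν (ball z (dist z w)))⁻¹

/-- The constant of the tail estimate with `a = θp`: the factor `2 ^ a` comes from passing to the
radius `R / 2`, and `(1 - 2 ^ (-a))⁻¹` is the sum of the geometric series over the annuli. -/
noncomputable def tailConst (Cν a : ℝ) : ℝ :=
  Cν * 2 ^ a * (1 - 2 ^ (-a))⁻¹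

theorem one_le_tailConst {Cν a : ℝ} (hC : 1 ≤ Cν) (ha : 0 < a) : 1 ≤ tailConst Cν a := by
  have h_pow : (1 : ℝ) ≤ 2 ^ a := Real.one_le_rpow one_le_two ha.le
  have h_sum : (1 : ℝ) ≤ (1 - 2 ^ (-a))⁻¹ :=
    (one_le_inv₀ (sub_pos.2 (two_rpow_neg_lt_one ha))).2 (sub_le_self 1 (by positivity))
  exact one_le_mul_of_one_le_of_one_le (one_le_mul_of_one_le_of_one_le hC h_pow) h_sum

section TailIntegral

variable {Z : Type*} [PseudoMetricSpace Z] [MeasurableSpace Z] {ν : Measure Z} {Cν a r : ℝ}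

theorem IsDoublingWith.measure_ball_pos_s5 (hν : IsDoublingWith ν Cν) (z : Z) (hr : 0 < r) :
    0 < ν (ball z r) := by
  simpa only [mul_div_cancel₀ r two_ne_zero] using (hν z (r / 2) (half_pos hr)).1

theorem IsDoublingWith.const_pos (hν : IsDoublingWith ν Cν) (z : Z) : 0 < Cν := by
  obtain ⟨h_pos, h_doubling, -⟩ := hν z 1 one_pos
  exact ENNReal.ofReal_pos.1 (pos_of_mul_pos_left (h_pos.trans_le h_doubling) zero_le)

theorem setLIntegral_tailKernel_le (ha : 0 ≤ a) (hr : 0 ≤ r) {z : Z} {s : Set Z}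
    (hs : s ⊆ (ball z r)ᶜ) :
    ∫⁻ w in s, tailKernel ν a z w ∂ν ≤ (ENNReal.ofReal (r ^ a) * ν (ball z r))⁻¹ * ν s := by
  rw [← setLIntegral_const]
  refine setLIntegral_mono measurable_const fun w hw ↦ ?_
  have hrw : r ≤ dist z w := by simpa [dist_comm] using hs hw
  unfold tailKernel
  gcongr

theorem IsDoublingWith.setLIntegral_annulus_tailKernel_le (hν : IsDoublingWith ν Cν)
    (ha : 0 ≤ a) (hr : 0 < r) (z : Z) :
    ∫⁻ w in ball z (2 * r) \ ball z r, tailKernel ν a z w ∂ν ≤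
      ENNReal.ofReal (Cν * r ^ (-a)) := by
  obtain ⟨-, h_doubling, h_lt_top⟩ := hν z r hr
  have h_ne_zero : ν (ball z r) ≠ 0 := (hν.measure_ball_pos_s5 z hr).ne'
  calc ∫⁻ w in ball z (2 * r) \ ball z r, tailKernel ν a z w ∂ν
    _ ≤ (ENNReal.ofReal (r ^ a) * ν (ball z r))⁻¹ * ν (ball z (2 * r) \ ball z r) :=
        setLIntegral_tailKernel_le ha hr.le fun _ hw ↦ hw.2
    _ ≤ (ENNReal.ofReal (r ^ a) * ν (ball z r))⁻¹ * (ENNReal.ofReal Cν * ν (ball z r)) := by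
        gcongr
        exact (measure_mono sdiff_subset).trans h_doubling
    _ = ENNReal.ofReal Cν * (ENNReal.ofReal (r ^ a))⁻¹ * ((ν (ball z r))⁻¹ * ν (ball z r)) := by
        rw [ENNReal.mul_inv (Or.inr h_lt_top.ne) (Or.inr h_ne_zero)]
        ring
    _ = ENNReal.ofReal (Cν * r ^ (-a)) := by
        rw [ENNReal.inv_mul_cancel h_ne_zero h_lt_top.ne, mul_one, Real.rpow_neg hr.le,
          ENNReal.ofReal_mul' (by positivity), ENNReal.ofReal_inv_of_pos (by positivity)]

theorem IsDoublingWith.setLIntegral_compl_ball_tailKernel_le (hν : IsDoublingWith ν Cν)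
    (ha : 0 < a) (hr : 0 < r) (z : Z) :
    ∫⁻ w in (ball z r)ᶜ, tailKernel ν a z w ∂ν ≤
      ENNReal.ofReal (Cν * r ^ (-a) * (1 - 2 ^ (-a))⁻¹) := by
  have hC : 0 ≤ Cν := (hν.const_pos z).le
  have h_scale (k : ℕ) : Cν * (2 ^ k * r) ^ (-a) = Cν * r ^ (-a) * (2 ^ (-a)) ^ k := by
    rw [Real.mul_rpow (by positivity) hr.le, ← Real.rpow_pow_comm zero_le_two]
    ring
  calc ∫⁻ w in (ball z r)ᶜ, tailKernel ν a z w ∂ν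
    _ ≤ ∫⁻ w in ⋃ k : ℕ, ball z (2 ^ (k + 1) * r) \ ball z (2 ^ k * r), tailKernel ν a z w ∂ν :=
        lintegral_mono_set (compl_ball_subset_iUnion_annulus z hr one_lt_two)
    _ ≤ ∑' k : ℕ, ∫⁻ w in ball z (2 ^ (k + 1) * r) \ ball z (2 ^ k * r), tailKernel ν a z w ∂ν :=
        lintegral_iUnion_le _ _
    _ ≤ ∑' k : ℕ, ENNReal.ofReal (Cν * r ^ (-a) * (2 ^ (-a)) ^ k) := by
        refine ENNReal.tsum_le_tsum fun k ↦ ?_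
        rw [pow_succ', mul_assoc, ← h_scale]
        exact hν.setLIntegral_annulus_tailKernel_le ha.le (by positivity) z
    _ = ENNReal.ofReal (Cν * r ^ (-a) * (1 - 2 ^ (-a))⁻¹) :=
        tsum_ofReal_mul_geometric (by positivity) (by positivity) (two_rpow_neg_lt_one ha)

theorem tail_integral_estimate_general (hν : IsDoublingWith ν Cν) (ha : 0 < a)
    {R : ℝ} (hR : 0 < R) {z z₀ : Z} (hz : dist z z₀ ≤ R / 2) :
    ∫⁻ w in (ball z₀ R)ᶜ, tailKernel ν a z w ∂ν ≤ ENNReal.ofReal (tailConst Cν a * R ^ (-a)) := by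
  have h_ball : ball z (R / 2) ⊆ ball z₀ R := ball_subset_ball' (by linarith)
  have h_const :
      Cν * (R / 2) ^ (-a) * (1 - 2 ^ (-a))⁻¹ = tailConst Cν a * R ^ (-a) := by
    rw [tailConst, Real.div_rpow hR.le zero_le_two, Real.rpow_neg zero_le_two, div_inv_eq_mul]
    ring
  calc ∫⁻ w in (ball z₀ R)ᶜ, tailKernel ν a z w ∂ν
    _ ≤ ∫⁻ w in (ball z (R / 2))ᶜ, tailKernel ν a z w ∂ν :=
        lintegral_mono_set (compl_subset_compl.2 h_ball)
    _ ≤ ENNReal.ofReal (Cν * (R / 2) ^ (-a) * (1 - 2 ^ (-a))⁻¹) :=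
        hν.setLIntegral_compl_ball_tailKernel_le ha (half_pos hR) z
    _ = ENNReal.ofReal (tailConst Cν a * R ^ (-a)) := by rw [h_const]

end TailIntegral

/-- Tail integral estimate: there is a constant `C₁ ≥ 1` depending only on the doubling
constant `Cν`, `θ` and `p` such that in any doubling metric measure space, for every
`z₀`, `R > 0` and every `z` with `d(z,z₀) ≤ R/2`,
`∫_{Z∖B(z₀,R)} d(z,w)^{-θp} ν(B(z,d(z,w)))^{-1} dν(w) ≤ C₁ R^{-θp}`. -/
theorem tail_integral_estimate :
    ∃ C₁ : ℝ → ℝ → ℝ → ℝ,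
      ∀ Cν θ p : ℝ, 1 ≤ Cν → 0 < θ → θ < 1 → 1 < p →
        1 ≤ C₁ Cν θ p ∧
        ∀ (Z : Type) [MetricSpace Z] [MeasurableSpace Z] (ν : Measure Z),
          IsDoublingWith ν Cν →
          ∀ (z₀ : Z) (R : ℝ), 0 < R → ∀ z : Z, dist z z₀ ≤ R / 2 →
            ∫⁻ w in (ball z₀ R)ᶜ,
                (ENNReal.ofReal (dist z w ^ (θ * p)) * ν (ball z (dist z w)))⁻¹ ∂ν ≤
              ENNReal.ofReal (C₁ Cν θ p * R ^ (-(θ * p))) := by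
  refine ⟨fun Cν θ p ↦ tailConst Cν (θ * p), fun Cν θ p hC hθ _ hp ↦ ?_⟩
  have ha : 0 < θ * p := mul_pos hθ (one_pos.trans hp)
  exact ⟨one_le_tailConst hC ha, fun _ _ _ _ hν _ _ hR _ hz ↦
    tail_integral_estimate_general hν ha hR hz⟩
end

section
/- Let n ≥ 1, 0<θ<1 and 1<p<∞ with θp < n, and let Ω = B(0,1)∖{0} ⊂ ℝⁿ be the punctured open unit ball. Then Ω satisfies a (θ,p)-fractional Hardy inequality with respect to Lebesgue measure: there exists a constant C ≥ 1 such that for every Lipschitz function u : ℝⁿ → ℝ with compact support contained in Ω, ∫_Ω |u(x)|^p / dist(x, ℝⁿ∖Ω)^{θp} dx ≤ C ∫_{ℝⁿ} ∫_{ℝⁿ} |u(x)−u(y)|^p / (|x−y|^{θp} · Lⁿ(B(x,|x−y|))) dy dx, where Lⁿ is n-dimensional Lebesgue measure. -/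
open MeasureTheory Metric Set ENNReal

open Module (finrank)

/-!
The distance to the complement of `B ∖ {a}` is the smaller of the distances to `Bᶜ` and to `a`, so
it suffices to prove Hardy inequalities for the ball `B` and for the complement of the point `a`.

At a point `x ∈ B`, a ball around `x` of radius comparable to `d(x, Bᶜ)` meets `Bᶜ` in a fixed
proportion of its volume. Since `u` vanishes on `Bᶜ`, the inner Gagliardo integral at `x` controls
the Hardy integrand.

For the point, put `s = θp < n` and compare `u x` with `u y` for `R |x - a| ≤ |y - a| < 2R |x - a|`.
After dividing by `|x - a|^(s + n)`, integrating in `y` gives at least a multiple of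
`R ^ n |x - a|^(-s)`, while integrating in `x` gives at most a multiple of `R ^ s |y - a|^(-s)`.
As `s < n`, for large `R` the term with `u y` is absorbed by the one with `u x`. This is
legitimate because `∫ |u|^p |x - a|^(-s)` is finite, `a` lying outside the support of `u`.
-/

theorem min_infDist_le_infDist_union {Z : Type*} [PseudoMetricSpace Z] (x : Z) (A B : Set Z) :
    min (infDist x A) (infDist x B) ≤ infDist x (A ∪ B) := by
  rcases A.eq_empty_or_nonempty with rfl | hA
  · simp [infDist_nonneg]
  rcases B.eq_empty_or_nonempty with rfl | hB
  · simp [infDist_nonneg]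
  rw [infDist, infDist, infDist, infEDist_union,
    ENNReal.toReal_inf (infEDist_ne_top hA) (infEDist_ne_top hB)]

theorem div_infDist_compl_inter_rpow_le {Z : Type*} [PseudoMetricSpace Z] {s : ℝ} (hs : 0 ≤ s)
    (c : ℝ≥0∞) (U V : Set Z) (x : Z) :
    c / ENNReal.ofReal (infDist x (U ∩ V)ᶜ ^ s) ≤
      c / ENNReal.ofReal (infDist x Uᶜ ^ s) + c / ENNReal.ofReal (infDist x Vᶜ ^ s) := by
  have hmin := min_infDist_le_infDist_union x Uᶜ Vᶜ
  rw [← compl_inter] at hmin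
  rcases min_choice (infDist x Uᶜ) (infDist x Vᶜ) with h | h <;> rw [h] at hmin
  · refine le_trans ?_ le_self_add
    gcongr
    exact infDist_nonneg
  · refine le_trans ?_ le_add_self
    gcongr
    exact infDist_nonneg

theorem inv_ofReal_rpow_le {d r κ s : ℝ} (hr : 0 < r) (hd : 0 ≤ d) (hrd : r ≤ κ * d) (hs : 0 ≤ s) :
    (ENNReal.ofReal (d ^ s))⁻¹ ≤ ENNReal.ofReal (κ ^ s) * (ENNReal.ofReal (r ^ s))⁻¹ := by
  have hκd : 0 < κ * d := hr.trans_le hrd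
  have hκ : 0 < κ := pos_of_mul_pos_left hκd hd
  have hd' : 0 < d := pos_of_mul_pos_right hκd hκ.le
  rw [← ofReal_inv_of_pos (by positivity), ← ofReal_inv_of_pos (by positivity),
    ← ofReal_mul (by positivity)]
  refine ofReal_le_ofReal ?_
  rw [inv_le_iff_one_le_mul₀ (by positivity), mul_right_comm, ← Real.mul_rpow hκ.le hd,
    ← div_eq_mul_inv, one_le_div (by positivity)]
  exact Real.rpow_le_rpow hr.le hrd hs

section MetricMeasureSpace

variable {Z : Type*} [MetricSpace Z] [MeasurableSpace Z] {ν : Measure Z} {F : Type*}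
  [NormedAddCommGroup F] {θ p s : ℝ}

/-- The measure of the ball `B(x,r)` scaled by `r ^ s`; at `r = d(x,y)` this is the denominator
`d(x,y)^s ν(B(x,d(x,y)))` of the Gagliardo kernel. -/
noncomputable def weightedBallVolume (ν : Measure Z) (s : ℝ) (x : Z) (r : ℝ) : ℝ≥0∞ :=
  ENNReal.ofReal (r ^ s) * ν (ball x r)

/-- The inner integral `∫ |u(x)-u(y)|^p / (d(x,y)^s ν(B(x,d(x,y)))) dν(y)` of the Gagliardo
energy of smoothness `s / p`, with extended norms in place of real absolute values. -/
noncomputable def gagliardoDensity (ν : Measure Z) (s p : ℝ) (u : Z → F) (x : Z) : ℝ≥0∞ :=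
  ∫⁻ y, ‖u x - u y‖ₑ ^ p / weightedBallVolume ν s x (dist x y) ∂ν

theorem fracHardy_iff_gagliardoDensity {Ω : Set Z} {C : ℝ} (hp : 0 ≤ p) :
    FracHardy ν Ω θ p C ↔
      ∀ u : Z → ℝ, (∃ K : NNReal, LipschitzWith K u) → HasCompactSupport u → tsupport u ⊆ Ω →
        ∫⁻ x in Ω, ‖u x‖ₑ ^ p / ENNReal.ofReal (infDist x Ωᶜ ^ (θ * p)) ∂ν ≤
          ENNReal.ofReal C * ∫⁻ x, gagliardoDensity ν (θ * p) p u x ∂ν := by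
  simp only [FracHardy, gagliardoDensity, weightedBallVolume, Real.enorm_eq_ofReal_abs,
    ENNReal.ofReal_rpow_of_nonneg (abs_nonneg _) hp]

theorem weightedBallVolume_mono (hs : 0 ≤ s) (x : Z) {r R : ℝ} (hr : 0 ≤ r) (hrR : r ≤ R) :
    weightedBallVolume ν s x r ≤ weightedBallVolume ν s x R :=
  mul_le_mul' (ofReal_le_ofReal (Real.rpow_le_rpow hr hrR hs)) (measure_mono (ball_subset_ball hrR))

theorem inv_weightedBallVolume_mul_measure_ball {x : Z} {r : ℝ} (h₀ : ν (ball x r) ≠ 0)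
    (h : ν (ball x r) ≠ ⊤) :
    (weightedBallVolume ν s x r)⁻¹ * ν (ball x r) = (ENNReal.ofReal (r ^ s))⁻¹ := by
  rw [weightedBallVolume, ENNReal.mul_inv (.inr h) (.inr h₀), mul_assoc,
    ENNReal.inv_mul_cancel h₀ h, mul_one]

theorem measurable_weightedBallVolume (ν : Measure Z) (s : ℝ) (x : Z) :
    Measurable (weightedBallVolume ν s x) := by
  have hball : Monotone fun r => ν (ball x r) := fun _ _ h => measure_mono (ball_subset_ball h)
  exact (by fun_prop : Measurable fun r : ℝ => ENNReal.ofReal (r ^ s)).mul hball.measurable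

theorem FracHardy.inter [OpensMeasurableSpace Z] {U V : Set Z} {C₁ C₂ : ℝ} (hs : 0 ≤ θ * p)
    (hC₁ : 0 ≤ C₁) (hC₂ : 0 ≤ C₂) (hU : FracHardy ν U θ p C₁) (hV : FracHardy ν V θ p C₂) :
    FracHardy ν (U ∩ V) θ p (C₁ + C₂) := by
  intro u hLip hcs hsupp
  have hu : Measurable u := hLip.choose_spec.continuous.measurable
  have hU' := hU u hLip hcs (hsupp.trans inter_subset_left)
  have hV' := hV u hLip hcs (hsupp.trans inter_subset_right)
  rw [ofReal_add hC₁ hC₂, add_mul]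
  refine le_trans ?_ (add_le_add hU' hV')
  refine (lintegral_mono fun x => div_infDist_compl_inter_rpow_le hs _ U V x).trans ?_
  rw [lintegral_add_left (by fun_prop)]
  exact add_le_add (lintegral_mono_set inter_subset_left) (lintegral_mono_set inter_subset_right)

theorem enorm_rpow_mul_measure_le_gagliardoDensity (hs : 0 ≤ s) {u : Z → F} {x : Z} {r : ℝ}
    {A : Set Z} (hA : MeasurableSet A) (hAr : A ⊆ ball x r) (hu : ∀ y ∈ A, u y = 0) :
    ‖u x‖ₑ ^ p / weightedBallVolume ν s x r * ν A ≤ gagliardoDensity ν s p u x := by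
  rw [← setLIntegral_const]
  refine (setLIntegral_mono' hA fun y hy => ?_).trans (setLIntegral_le_lintegral A _)
  have hxy : dist x y ≤ r := (mem_ball'.1 (hAr hy)).le
  rw [hu y hy, sub_zero]
  exact ENNReal.div_le_div_left (weightedBallVolume_mono hs x dist_nonneg hxy) _

theorem fracHardy_of_measure_ball_le_measure_ball_diff [OpensMeasurableSpace Z] {Ω : Set Z}
    (hΩ : MeasurableSet Ω) (hθ : 0 ≤ θ) (hp : 0 < p) {κ A : ℝ}
    (h : ∀ x ∈ Ω, ∃ r, r ≤ κ * infDist x Ωᶜ ∧ ν (ball x r) ≠ 0 ∧ ν (ball x r) ≠ ⊤ ∧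
      ν (ball x r) ≤ ENNReal.ofReal A * ν (ball x r \ Ω)) :
    FracHardy ν Ω θ p (κ ^ (θ * p) * A) := by
  have hs : 0 ≤ θ * p := by positivity
  rw [fracHardy_iff_gagliardoDensity hp.le]
  intro u _ _ hsupp
  refine le_trans (setLIntegral_mono' hΩ fun x hx => ?_) ((lintegral_const_mul' _ _
    ofReal_ne_top).le.trans (mul_le_mul_right (setLIntegral_le_lintegral Ω _) _))
  obtain ⟨r, hrΩ, h₀, htop, hthick⟩ := h x hx
  have hr : 0 < r := nonempty_ball.1 (nonempty_of_measure_ne_zero h₀)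
  have hvanish : ∀ y ∈ ball x r \ Ω, u y = 0 := fun y hy =>
    image_eq_zero_of_notMem_tsupport fun hyu => hy.2 (hsupp hyu)
  have hκ : 0 ≤ κ := (pos_of_mul_pos_left (hr.trans_le hrΩ) infDist_nonneg).le
  calc ‖u x‖ₑ ^ p / ENNReal.ofReal (infDist x Ωᶜ ^ (θ * p))
      ≤ ‖u x‖ₑ ^ p * (ENNReal.ofReal (κ ^ (θ * p)) * (ENNReal.ofReal (r ^ (θ * p)))⁻¹) := by
        rw [div_eq_mul_inv]
        gcongr
        exact inv_ofReal_rpow_le hr infDist_nonneg hrΩ hs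
    _ = ENNReal.ofReal (κ ^ (θ * p)) *
          (‖u x‖ₑ ^ p / weightedBallVolume ν (θ * p) x r * ν (ball x r)) := by
        rw [← inv_weightedBallVolume_mul_measure_ball h₀ htop, div_eq_mul_inv]; ring
    _ ≤ ENNReal.ofReal (κ ^ (θ * p)) * (‖u x‖ₑ ^ p / weightedBallVolume ν (θ * p) x r *
          (ENNReal.ofReal A * ν (ball x r \ Ω))) := by gcongr
    _ = ENNReal.ofReal (κ ^ (θ * p) * A) *
          (‖u x‖ₑ ^ p / weightedBallVolume ν (θ * p) x r * ν (ball x r \ Ω)) := by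
        rw [ofReal_mul (by positivity)]; ring
    _ ≤ _ := by
        gcongr
        exact enorm_rpow_mul_measure_le_gagliardoDensity hs (measurableSet_ball.diff hΩ)
          sdiff_subset hvanish

/-- The Schur kernel that compares `u x` with the values of `u` on the annulus
`R d(x,a) ≤ d(y,a) < 2R d(x,a)`, a fixed factor `R` farther away from `a`. -/
noncomputable def annularKernel (ν : Measure Z) (s R : ℝ) (a x y : Z) : ℝ≥0∞ :=
  (ball a (2 * (R * dist x a)) \ ball a (R * dist x a)).indicator
    (fun _ => (weightedBallVolume ν s a (dist x a))⁻¹) y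

theorem measurable_annularKernel [OpensMeasurableSpace Z] (ν : Measure Z) (s R : ℝ) (a : Z) :
    Measurable (Function.uncurry (annularKernel ν s R a)) := by
  have hfar : MeasurableSet {q : Z × Z | dist q.2 a < 2 * (R * dist q.1 a)} :=
    measurableSet_lt (by fun_prop) (by fun_prop)
  have hnear : MeasurableSet {q : Z × Z | dist q.2 a < R * dist q.1 a} :=
    measurableSet_lt (by fun_prop) (by fun_prop)
  have hV : Measurable fun q : Z × Z => (weightedBallVolume ν s a (dist q.1 a))⁻¹ :=
    ((measurable_weightedBallVolume ν s a).comp (by fun_prop)).inv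
  exact hV.indicator (hfar.diff hnear)

end MetricMeasureSpace

section SchurTest

variable {α F : Type*} [MeasurableSpace α] {μ : Measure α} [SFinite μ] [NormedAddCommGroup F]
  {p : ℝ} {u : α → F} {G : α → α → ℝ≥0∞}

theorem lintegral_lintegral_enorm_rpow_mul_le (hp : 0 ≤ p) (hu : Measurable fun x => ‖u x‖ₑ)
    (hG : Measurable (Function.uncurry G)) :
    ∫⁻ x, ∫⁻ y, ‖u x‖ₑ ^ p * G x y ∂μ ∂μ ≤
      LpAddConst (ENNReal.ofReal p)⁻¹ * (∫⁻ x, ∫⁻ y, ‖u y‖ₑ ^ p * G x y ∂μ ∂μ +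
        ∫⁻ x, ∫⁻ y, ‖u x - u y‖ₑ ^ p * G x y ∂μ ∂μ) := by
  have hK := (LpAddConst_lt_top (ENNReal.ofReal p)⁻¹).ne
  have huG : Measurable (Function.uncurry fun x y => ‖u y‖ₑ ^ p * G x y) :=
    ((hu.comp measurable_snd).pow_const p).mul hG
  rw [← lintegral_add_left (f := fun x => ∫⁻ y, ‖u y‖ₑ ^ p * G x y ∂μ) huG.lintegral_prod_right',
    ← lintegral_const_mul' _ _ hK]
  refine lintegral_mono fun x => ?_
  have huGx : Measurable fun y => ‖u y‖ₑ ^ p * G x y := huG.of_uncurry_left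
  rw [← lintegral_add_left huGx, ← lintegral_const_mul' _ _ hK]
  refine lintegral_mono fun y => ?_
  have htri : ‖u x‖ₑ ≤ ‖u y‖ₑ + ‖u x - u y‖ₑ := by
    simpa using enorm_add_le (u y) (u x - u y)
  calc ‖u x‖ₑ ^ p * G x y ≤ (‖u y‖ₑ + ‖u x - u y‖ₑ) ^ p * G x y := by gcongr
    _ ≤ LpAddConst (ENNReal.ofReal p)⁻¹ * (‖u y‖ₑ ^ p + ‖u x - u y‖ₑ ^ p) * G x y := by
        gcongr
        exact rpow_add_le_mul_rpow_add_rpow' _ _ hp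
    _ = _ := by rw [mul_assoc, add_mul]

/- Replacing `u x` by `u y` under the kernel costs the energy term, and the row integrals of `G`
exceed its column integrals by so much that the remaining term is absorbed on the left. -/
theorem lintegral_enorm_rpow_mul_le_of_kernel_bounds (hp : 0 ≤ p)
    (hu : Measurable fun x => ‖u x‖ₑ) (hG : Measurable (Function.uncurry G)) {w : α → ℝ≥0∞}
    (hfin : ∫⁻ x, ‖u x‖ₑ ^ p * w x ∂μ ≠ ⊤) {a b : ℝ≥0∞} (hb : b ≠ ⊤)
    (hab : LpAddConst (ENNReal.ofReal p)⁻¹ * b + 1 ≤ a)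
    (hrow : ∀ᵐ x ∂μ, a * w x ≤ ∫⁻ y, G x y ∂μ) (hcol : ∀ᵐ y ∂μ, ∫⁻ x, G x y ∂μ ≤ b * w y) :
    ∫⁻ x, ‖u x‖ₑ ^ p * w x ∂μ ≤
      LpAddConst (ENNReal.ofReal p)⁻¹ * ∫⁻ x, ∫⁻ y, ‖u x - u y‖ₑ ^ p * G x y ∂μ ∂μ := by
  set K := LpAddConst (ENNReal.ofReal p)⁻¹
  set I := ∫⁻ x, ‖u x‖ₑ ^ p * w x ∂μ
  have hK : K ≠ ⊤ := (LpAddConst_lt_top _).ne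
  have hlower : a * I ≤ ∫⁻ x, ∫⁻ y, ‖u x‖ₑ ^ p * G x y ∂μ ∂μ := by
    refine (lintegral_const_mul_le _ _).trans (lintegral_mono_ae ?_)
    filter_upwards [hrow] with x hx
    rw [lintegral_const_mul _ hG.of_uncurry_left, mul_left_comm]
    gcongr
  have hupper : ∫⁻ x, ∫⁻ y, ‖u y‖ₑ ^ p * G x y ∂μ ∂μ ≤ b * I := by
    rw [lintegral_lintegral_swap (((hu.comp measurable_snd).pow_const p).mul hG).aemeasurable,
      ← lintegral_const_mul' _ _ hb]
    refine lintegral_mono_ae ?_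
    filter_upwards [hcol] with y hy
    rw [lintegral_const_mul _ hG.of_uncurry_right, mul_left_comm]
    gcongr
  have habsorb : K * (b * I) + I ≤
      K * (b * I) + K * ∫⁻ x, ∫⁻ y, ‖u x - u y‖ₑ ^ p * G x y ∂μ ∂μ :=
    calc K * (b * I) + I = (K * b + 1) * I := by ring
      _ ≤ a * I := by gcongr
      _ ≤ _ := hlower.trans (lintegral_lintegral_enorm_rpow_mul_le hp hu hG)
      _ ≤ _ := by rw [← mul_add]; gcongr
  exact (ENNReal.add_le_add_iff_left (mul_ne_top hK (mul_ne_top hb hfin))).1 habsorb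

end SchurTest

theorem lintegral_enorm_rpow_mul_ne_top {X F : Type*} [TopologicalSpace X] [MeasurableSpace X]
    [OpensMeasurableSpace X] {μ : Measure X} [IsFiniteMeasureOnCompacts μ] [NormedAddCommGroup F]
    {p : ℝ} (hp : 0 < p) {u : X → F} (hu : Continuous u) (hcs : HasCompactSupport u)
    {w : X → ℝ≥0∞} (hw : ContinuousOn w (tsupport u)) (hw_top : ∀ x ∈ tsupport u, w x ≠ ⊤) :
    ∫⁻ x, ‖u x‖ₑ ^ p * w x ∂μ ≠ ⊤ := by
  have hp' : ENNReal.ofReal p ≠ 0 := by simpa using hp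
  obtain hK | hK := (tsupport u).eq_empty_or_nonempty
  · simp [tsupport_eq_empty_iff.1 hK, hp]
  obtain ⟨x₀, hx₀, hmax⟩ := hcs.exists_isMaxOn hK hw
  have hbound : ∀ x, ‖u x‖ₑ ^ p * w x ≤ ‖u x‖ₑ ^ p * w x₀ := fun x => by
    by_cases hx : x ∈ tsupport u
    · gcongr
      exact hmax hx
    · simp [image_eq_zero_of_notMem_tsupport hx, hp]
  have hLp : ∫⁻ x, ‖u x‖ₑ ^ p ∂μ ≠ ⊤ := by
    have := lintegral_rpow_enorm_lt_top_of_eLpNorm_lt_top hp' ofReal_ne_top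
      (hu.memLp_of_hasCompactSupport (μ := μ) hcs).2
    rwa [toReal_ofReal hp.le, lt_top_iff_ne_top] at this
  refine ne_top_of_le_ne_top (mul_ne_top hLp (hw_top x₀ hx₀)) ?_
  exact (lintegral_mono hbound).trans_eq (lintegral_mul_const' _ _ (hw_top x₀ hx₀))

theorem exists_mul_rpow_add_one_le_rpow {s t : ℝ} (hs : 0 ≤ s) (hst : s < t) (K : ℝ) :
    ∃ R : ℝ, 1 ≤ R ∧ K * R ^ s + 1 ≤ R ^ t := by
  have hgrow := (tendsto_rpow_atTop (sub_pos.2 hst)).eventually_ge_atTop (K + 1)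
  obtain ⟨R, hR, hR1⟩ := (hgrow.and (Filter.eventually_ge_atTop 1)).exists
  refine ⟨R, hR1, ?_⟩
  calc K * R ^ s + 1 ≤ (K + 1) * R ^ s := by linarith [Real.one_le_rpow hR1 hs]
    _ ≤ R ^ (t - s) * R ^ s := by gcongr
    _ = R ^ t := by rw [← Real.rpow_add (by linarith), sub_add_cancel]

theorem exists_ball_subset_compl_ball {E : Type*} [NormedAddCommGroup E] [NormedSpace ℝ E]
    [Nontrivial E] {a x : E} {r : ℝ} (hx : x ∈ ball a r) :
    ∃ z, dist z x = 2 * (r - dist x a) ∧ ball z (r - dist x a) ⊆ (ball a r)ᶜ := by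
  obtain ⟨e, he, hxe⟩ : ∃ e : E, ‖e‖ = 1 ∧ x - a = dist x a • e := by
    rcases eq_or_ne x a with rfl | hxa
    · simpa using exists_norm_eq E zero_le_one
    · have hd : ‖x - a‖ ≠ 0 := norm_ne_zero_iff.2 (sub_ne_zero.2 hxa)
      exact ⟨‖x - a‖⁻¹ • (x - a), by simp [norm_smul, hd], by simp [dist_eq_norm, smul_smul, hd]⟩
  have hδ : 0 < r - dist x a := sub_pos.2 hx
  refine ⟨x + (2 * (r - dist x a)) • e, ?_, fun y hy hya => ?_⟩
  · simp [norm_smul, he, abs_of_pos hδ]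
  · have hza : dist (x + (2 * (r - dist x a)) • e) a = r + (r - dist x a) := by
      rw [dist_eq_norm, add_sub_right_comm, hxe, ← add_smul, norm_smul, he, Real.norm_eq_abs,
        abs_of_pos (by linarith [dist_nonneg (x := x) (y := a)])]
      ring
    linarith [dist_triangle_left (x + (2 * (r - dist x a)) • e) a y, mem_ball.1 hy, mem_ball.1 hya]

section Haar

variable {E : Type*} [NormedAddCommGroup E] [NormedSpace ℝ E] [FiniteDimensional ℝ E]
  [MeasurableSpace E] [BorelSpace E] (μ : Measure E) [μ.IsAddHaarMeasure] {θ p s : ℝ}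

theorem measure_ball_mul_eq (x y : E) {k : ℝ} (hk : 0 < k) (r : ℝ) :
    μ (ball x (k * r)) = ENNReal.ofReal (k ^ finrank ℝ E) * μ (ball y r) := by
  rw [Measure.addHaar_ball_mul_of_pos μ x hk, Measure.addHaar_ball_center μ y]

theorem weightedBallVolume_mul (x y : E) {k r : ℝ} (hk : 0 < k) (hr : 0 ≤ r) :
    weightedBallVolume μ s x (k * r) =
      ENNReal.ofReal (k ^ (s + finrank ℝ E)) * weightedBallVolume μ s y r := by
  rw [weightedBallVolume, weightedBallVolume, measure_ball_mul_eq μ x y hk,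
    Real.mul_rpow hk.le hr, Real.rpow_add_natCast hk.ne', ofReal_mul (by positivity),
    ofReal_mul (by positivity)]
  ring

theorem measure_ball_le_measure_ball_two_mul_diff [Nontrivial E] (x : E) (r : ℝ) :
    μ (ball x r) ≤ μ (ball x (2 * r) \ ball x r) := by
  have hdouble : μ (ball x r) + μ (ball x r) ≤ μ (ball x (2 * r)) := by
    rw [measure_ball_mul_eq μ x x two_pos, ← two_mul]
    gcongr
    rw [← ofReal_ofNat 2]
    exact ofReal_le_ofReal (le_self_pow₀ one_le_two Module.finrank_pos.ne')
  exact (ENNReal.le_sub_of_add_le_right measure_ball_lt_top.ne hdouble).trans le_measure_sdiff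

theorem fracHardy_ball (hθ : 0 ≤ θ) (hp : 0 < p) [Nontrivial E] (a : E) (r : ℝ) :
    FracHardy μ (ball a r) θ p (3 ^ (θ * p) * 3 ^ finrank ℝ E) := by
  refine fracHardy_of_measure_ball_le_measure_ball_diff measurableSet_ball hθ hp
    fun x hx => ?_
  obtain ⟨z, hzx, hz⟩ := exists_ball_subset_compl_ball hx
  have hδ : 0 < r - dist x a := sub_pos.2 hx
  set δ := r - dist x a
  have hinf : δ ≤ infDist x (ball a r)ᶜ := by
    refine (le_infDist ⟨z, hz (mem_ball_self hδ)⟩).2 fun y hy => ?_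
    have hya : r ≤ dist y a := by simpa using hy
    linarith [dist_triangle_left y a x]
  have hzball : ball z δ ⊆ ball x (3 * δ) \ ball a r :=
    subset_inter (ball_subset_ball' (by linarith)) hz
  refine ⟨3 * δ, by linarith, (measure_ball_pos μ x (by positivity)).ne',
    measure_ball_lt_top.ne, ?_⟩
  rw [measure_ball_mul_eq μ x z three_pos]
  gcongr

theorem lintegral_annularKernel_ge [Nontrivial E] {R : ℝ} (hR : 0 < R) {a x : E} (hx : x ≠ a) :
    ENNReal.ofReal (R ^ finrank ℝ E) * (ENNReal.ofReal (dist x a ^ s))⁻¹ ≤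
      ∫⁻ y, annularKernel μ s R a x y ∂μ := by
  have hx' : 0 < dist x a := dist_pos.2 hx
  simp only [annularKernel]
  rw [lintegral_indicator_const (measurableSet_ball.diff measurableSet_ball),
    ← inv_weightedBallVolume_mul_measure_ball (measure_ball_pos μ a hx').ne'
      measure_ball_lt_top.ne, mul_left_comm, ← measure_ball_mul_eq μ a a hR]
  exact mul_le_mul_right (measure_ball_le_measure_ball_two_mul_diff μ a _) _

theorem lintegral_annularKernel_le [Nontrivial E] (hs : 0 ≤ s) {R : ℝ} (hR : 0 < R) {a y : E}
    (hy : y ≠ a) :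
    ∫⁻ x, annularKernel μ s R a x y ∂μ ≤
      ENNReal.ofReal (2 ^ finrank ℝ E * (2 * R) ^ s) * (ENNReal.ofReal (dist y a ^ s))⁻¹ := by
  have hy' : 0 < dist y a := dist_pos.2 hy
  set t := dist y a / (2 * R) with ht
  have ht_pos : 0 < t := by positivity
  have hyt : dist y a = 2 * R * t := by rw [ht]; field_simp
  have hle : ∀ x, annularKernel μ s R a x y ≤
      (closedBall a (2 * t)).indicator (fun _ => (weightedBallVolume μ s a t)⁻¹) x := by
    intro x
    refine indicator_apply_le' (fun hyx => ?_) fun _ => zero_le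
    have hlt : dist y a < 2 * (R * dist x a) := hyx.1
    have hge : R * dist x a ≤ dist y a := by simpa using hyx.2
    have hxt : x ∈ closedBall a (2 * t) := mem_closedBall.2 (by nlinarith)
    rw [indicator_of_mem hxt]
    exact ENNReal.inv_le_inv.2 (weightedBallVolume_mono hs a ht_pos.le (by nlinarith))
  calc ∫⁻ x, annularKernel μ s R a x y ∂μ
      ≤ (weightedBallVolume μ s a t)⁻¹ * μ (ball a (2 * t)) := by
        rw [← Measure.addHaar_closedBall_eq_addHaar_ball,
          ← lintegral_indicator_const measurableSet_closedBall]
        exact lintegral_mono hle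
    _ = ENNReal.ofReal (2 ^ finrank ℝ E) * (ENNReal.ofReal (t ^ s))⁻¹ := by
        rw [measure_ball_mul_eq μ a a two_pos, mul_left_comm,
          inv_weightedBallVolume_mul_measure_ball (measure_ball_pos μ a ht_pos).ne'
            measure_ball_lt_top.ne]
    _ = _ := by
        rw [hyt, Real.mul_rpow (x := 2 * R) (by positivity) ht_pos.le,
          ← ofReal_inv_of_pos (by positivity), ← ofReal_inv_of_pos (by positivity),
          ← ofReal_mul (by positivity), ← ofReal_mul (by positivity)]
        congr 1
        field_simp

theorem annularKernel_le (hs : 0 ≤ s) {R : ℝ} (hR : 0 < R) (a x y : E) :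
    annularKernel μ s R a x y ≤
      ENNReal.ofReal ((1 + 2 * R) ^ (s + finrank ℝ E)) *
        (weightedBallVolume μ s x (dist x y))⁻¹ := by
  refine indicator_apply_le' (fun hyx => ?_) fun _ => zero_le
  set k := ENNReal.ofReal ((1 + 2 * R) ^ (s + finrank ℝ E))
  have hk : k ≠ 0 := by simp only [k, ne_eq, ofReal_eq_zero, not_le]; positivity
  have hxy : dist x y ≤ (1 + 2 * R) * dist x a := by
    have hlt : dist y a < 2 * (R * dist x a) := hyx.1
    linarith [dist_triangle_right x y a]
  have hV : weightedBallVolume μ s x (dist x y) ≤ k * weightedBallVolume μ s a (dist x a) := by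
    rw [← weightedBallVolume_mul μ x a (by positivity) dist_nonneg]
    exact weightedBallVolume_mono hs x dist_nonneg hxy
  calc (weightedBallVolume μ s a (dist x a))⁻¹
      = k * (k * weightedBallVolume μ s a (dist x a))⁻¹ := by
        rw [ENNReal.mul_inv (.inl hk) (.inl ofReal_ne_top), ← mul_assoc,
          ENNReal.mul_inv_cancel hk ofReal_ne_top, one_mul]
    _ ≤ _ := by gcongr

theorem lintegral_enorm_rpow_mul_annularKernel_le {F : Type*} [NormedAddCommGroup F] (hs : 0 ≤ s)
    {R : ℝ} (hR : 0 < R) (a : E) (u : E → F) :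
    ∫⁻ x, ∫⁻ y, ‖u x - u y‖ₑ ^ p * annularKernel μ s R a x y ∂μ ∂μ ≤
      ENNReal.ofReal ((1 + 2 * R) ^ (s + finrank ℝ E)) * ∫⁻ x, gagliardoDensity μ s p u x ∂μ := by
  rw [← lintegral_const_mul' _ _ ofReal_ne_top]
  refine lintegral_mono fun x => ?_
  rw [gagliardoDensity, ← lintegral_const_mul' _ _ ofReal_ne_top]
  refine lintegral_mono fun y => ?_
  rw [div_eq_mul_inv, mul_left_comm]
  gcongr
  exact annularKernel_le μ hs hR a x y

theorem exists_lintegral_enorm_rpow_mul_le_gagliardo {F : Type*} [NormedAddCommGroup F]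
    (hs : 0 ≤ s) (hsE : s < finrank ℝ E) (hp : 0 < p) :
    ∃ C : ℝ, 0 ≤ C ∧ ∀ (a : E) (u : E → F), Continuous u → HasCompactSupport u → a ∉ tsupport u →
      ∫⁻ x, ‖u x‖ₑ ^ p * (ENNReal.ofReal (dist x a ^ s))⁻¹ ∂μ ≤
        ENNReal.ofReal C * ∫⁻ x, gagliardoDensity μ s p u x ∂μ := by
  have : Nontrivial E :=
    Module.nontrivial_of_finrank_pos (R := ℝ) (by exact_mod_cast hs.trans_lt hsE)
  set K := LpAddConst (ENNReal.ofReal p)⁻¹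
  have hK : ENNReal.ofReal K.toReal = K := ofReal_toReal (LpAddConst_lt_top _).ne
  obtain ⟨R, hR1, hR⟩ :=
    exists_mul_rpow_add_one_le_rpow hs hsE (K.toReal * (2 ^ finrank ℝ E * 2 ^ s))
  have hR0 : 0 < R := by linarith
  have hab : K * ENNReal.ofReal (2 ^ finrank ℝ E * (2 * R) ^ s) + 1 ≤
      ENNReal.ofReal (R ^ finrank ℝ E) := by
    rw [← hK, ← ofReal_mul toReal_nonneg, ← ofReal_one, ← ofReal_add (by positivity) one_pos.le,
      ← Real.rpow_natCast R]
    refine ofReal_le_ofReal (hR.trans' (le_of_eq ?_))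
    rw [Real.mul_rpow two_pos.le hR0.le]
    ring
  refine ⟨K.toReal * (1 + 2 * R) ^ (s + finrank ℝ E), by positivity, fun a u hu hcs ha => ?_⟩
  have hpos : ∀ x ∈ tsupport u, 0 < dist x a := fun x hx => dist_pos.2 fun h => ha (h ▸ hx)
  have hfin : ∫⁻ x, ‖u x‖ₑ ^ p * (ENNReal.ofReal (dist x a ^ s))⁻¹ ∂μ ≠ ⊤ := by
    refine lintegral_enorm_rpow_mul_ne_top hp hu hcs ?_ fun x hx => ?_
    · exact (continuous_inv.comp (continuous_ofReal.comp
        ((continuous_id.dist continuous_const).rpow_const fun _ => .inr hs))).continuousOn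
    · simpa using Real.rpow_pos_of_pos (hpos x hx) s
  have hne : ∀ᵐ x ∂μ, x ≠ a := Measure.ae_ne μ a
  calc _ ≤ K * ∫⁻ x, ∫⁻ y, ‖u x - u y‖ₑ ^ p * annularKernel μ s R a x y ∂μ ∂μ :=
        lintegral_enorm_rpow_mul_le_of_kernel_bounds hp.le hu.enorm.measurable
          (measurable_annularKernel μ s R a) hfin ofReal_ne_top hab
          (hne.mono fun x hx => lintegral_annularKernel_ge μ hR0 hx)
          (hne.mono fun y hy => lintegral_annularKernel_le μ hs hR0 hy)
    _ ≤ K * (ENNReal.ofReal ((1 + 2 * R) ^ (s + finrank ℝ E)) *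
          ∫⁻ x, gagliardoDensity μ s p u x ∂μ) := by
        gcongr
        exact lintegral_enorm_rpow_mul_annularKernel_le μ hs hR0 a u
    _ = _ := by rw [ofReal_mul toReal_nonneg, hK, mul_assoc]

theorem exists_fracHardy_compl_singleton (hθ : 0 ≤ θ) (hp : 0 < p) (hθp : θ * p < finrank ℝ E) :
    ∃ C : ℝ, 0 ≤ C ∧ ∀ a : E, FracHardy μ {a}ᶜ θ p C := by
  obtain ⟨C, hC, h⟩ := exists_lintegral_enorm_rpow_mul_le_gagliardo (F := ℝ) μ
    (mul_nonneg hθ hp.le) hθp hp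
  refine ⟨C, hC, fun a => (fracHardy_iff_gagliardoDensity hp.le).2 fun u ⟨_, hu⟩ hcs hsupp => ?_⟩
  simp only [compl_compl, infDist_singleton, div_eq_mul_inv]
  exact (setLIntegral_le_lintegral _ _).trans
    (h a u hu.continuous hcs fun ha => hsupp ha rfl)

theorem fracHardy_punctured_unit_ball_general (hθ : 0 ≤ θ) (hp : 0 < p)
    (hθp : θ * p < finrank ℝ E) :
    ∃ C : ℝ, 1 ≤ C ∧ ∀ (x a : E) (r : ℝ), FracHardy μ (ball x r \ {a}) θ p C := by
  have hs : 0 ≤ θ * p := by positivity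
  have : Nontrivial E :=
    Module.nontrivial_of_finrank_pos (R := ℝ) (by exact_mod_cast hs.trans_lt hθp)
  obtain ⟨C, hC, h⟩ := exists_fracHardy_compl_singleton μ hθ hp hθp
  have h3 : 1 ≤ (3 : ℝ) ^ (θ * p) * 3 ^ finrank ℝ E :=
    one_le_mul_of_one_le_of_one_le (Real.one_le_rpow (by norm_num) hs)
      (one_le_pow₀ (by norm_num))
  exact ⟨3 ^ (θ * p) * 3 ^ finrank ℝ E + C, by linarith, fun x a r =>
    (fracHardy_ball μ hθ hp x r).inter hs (by positivity) hC (h a)⟩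

end Haar

/-- The punctured unit ball `B(0,1)∖{0}` in `ℝⁿ` satisfies a `(θ,p)`-fractional Hardy
inequality with respect to Lebesgue measure whenever `θp < n`. -/
theorem fracHardy_punctured_unit_ball (n : ℕ) (hn : 1 ≤ n)
    (θ p : ℝ) (hθ₀ : 0 < θ) (hθ₁ : θ < 1) (hp : 1 < p) (hθpn : θ * p < n) :
    ∃ C : ℝ, 1 ≤ C ∧
      FracHardy (volume : Measure (EuclideanSpace ℝ (Fin n)))
        (ball (0 : EuclideanSpace ℝ (Fin n)) 1 \ {0}) θ p C := by
  obtain ⟨C, hC, h⟩ := fracHardy_punctured_unit_ball_general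
    (volume : Measure (EuclideanSpace ℝ (Fin n))) hθ₀.le (one_pos.trans hp) (by simpa using hθpn)
  exact ⟨C, hC, h 0 0 1⟩
end

section
/- Let n ≥ 1, 0<θ<1 and 1<p<∞ with θp < n, let Λ > 2 and r > 0. Then the fractional relative (θ,p)-capacity of the point {0} in ℝⁿ vanishes: the infimum, over all continuous functions u : ℝⁿ → ℝ with u(0) ≥ 1 and u = 0 on ℝⁿ∖B(0,2r), of ∫_{B(0,Λr)} ∫_{B(0,Λr)} |u(x)−u(y)|^p / (|x−y|^{θp} · Lⁿ(B(x,|x−y|))) dy dx equals 0, where Lⁿ is n-dimensional Lebesgue measure. -/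
open MeasureTheory Metric Set ENNReal

/-!
Write `d` for the dimension and `s = θp`. Dilating, `u ↦ u (c • ·)`, multiplies the energy over the
whole space by `c ^ (s - d)`, which tends to `0` as `c → ∞` because `s < d`. It also shrinks the
support of `u` to the origin and keeps `u 0`, so a single Lipschitz bump, whose energy is finite
because `0 < s < p`, yields admissible functions of arbitrarily small energy.
-/

section BesovEnergy

open Filter Module Topology

/-- The density of the Besov energy, with `s = θp`. On the diagonal it is `0`, as `0 ^ p = 0` for
`p ≠ 0` and `0 / 0 = 0`. -/
noncomputable def besovIntegrand {Z : Type*} [PseudoMetricSpace Z] [MeasurableSpace Z]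
    (μ : Measure Z) (s p : ℝ) (u : Z → ℝ) (x y : Z) : ℝ≥0∞ :=
  ENNReal.ofReal (|u x - u y| ^ p) / (ENNReal.ofReal (dist x y ^ s) * μ (ball x (dist x y)))

/-- The Besov energy of `u` over `B × B`, that is, the `p`-th power of the Besov seminorm of
smoothness `s / p` and integrability `p`. The balls in the density are not intersected with `B`. -/
noncomputable def besovEnergy {Z : Type*} [PseudoMetricSpace Z] [MeasurableSpace Z]
    (μ : Measure Z) (s p : ℝ) (B : Set Z) (u : Z → ℝ) : ℝ≥0∞ :=
  ∫⁻ x in B, ∫⁻ y in B, besovIntegrand μ s p u x y ∂μ ∂μ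

lemma besovIntegrand_of_eq {Z : Type*} [PseudoMetricSpace Z] [MeasurableSpace Z] (μ : Measure Z)
    (s : ℝ) {p : ℝ} (hp : p ≠ 0) {u : Z → ℝ} {x y : Z} (hxy : u x = u y) :
    besovIntegrand μ s p u x y = 0 := by
  simp [besovIntegrand, hxy, Real.zero_rpow hp]

lemma besovEnergy_mono {Z : Type*} [PseudoMetricSpace Z] [MeasurableSpace Z] (μ : Measure Z)
    (s p : ℝ) (u : Z → ℝ) {A B : Set Z} (hAB : A ⊆ B) :
    besovEnergy μ s p A u ≤ besovEnergy μ s p B u :=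
  (lintegral_mono_set hAB).trans (lintegral_mono fun _ ↦ lintegral_mono_set hAB)

lemma abs_sub_le_max_mul_min_one_dist {X : Type*} [PseudoMetricSpace X] {u : X → ℝ} {K : NNReal}
    {M : ℝ} (hu : LipschitzWith K u) (hM : ∀ x, |u x| ≤ M) (x y : X) :
    |u x - u y| ≤ max (K : ℝ) (2 * M) * min 1 (dist x y) := by
  rw [← Real.dist_eq]
  rcases le_total 1 (dist x y) with h | h
  · have hxy : dist (u x) (u y) ≤ |u x| + |u y| := abs_sub _ _
    rw [min_eq_left h, mul_one]
    exact le_max_of_le_right (by linarith [hM x, hM y])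
  · rw [min_eq_right h]
    exact (hu.dist_le_mul x y).trans (by gcongr; exact le_max_left _ _)

lemma lintegral_lintegral_add_mul_comp_sub {G : Type*} [AddCommGroup G] [MeasurableSpace G]
    [MeasurableAdd₂ G] [MeasurableNeg G] (μ : Measure G) [SFinite μ] [μ.IsAddLeftInvariant]
    [μ.IsNegInvariant] {f k : G → ℝ≥0∞} (hf : Measurable f) (hk : Measurable k) :
    ∫⁻ x, ∫⁻ y, (f x + f y) * k (x - y) ∂μ ∂μ = 2 * ((∫⁻ x, f x ∂μ) * ∫⁻ z, k z ∂μ) := by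
  have h_left : ∫⁻ x, ∫⁻ y, f x * k (x - y) ∂μ ∂μ = (∫⁻ x, f x ∂μ) * ∫⁻ z, k z ∂μ := by
    rw [← lintegral_mul_const _ hf]
    refine lintegral_congr fun x ↦ ?_
    rw [lintegral_const_mul _ (by fun_prop), lintegral_sub_left_eq_self k x]
  have h_right : ∫⁻ x, ∫⁻ y, f y * k (x - y) ∂μ ∂μ = (∫⁻ x, f x ∂μ) * ∫⁻ z, k z ∂μ := by
    rw [lintegral_lintegral_swap (by fun_prop), ← lintegral_mul_const _ hf]
    refine lintegral_congr fun y ↦ ?_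
    rw [lintegral_const_mul _ (by fun_prop), lintegral_sub_right_eq_self k y]
  calc ∫⁻ x, ∫⁻ y, (f x + f y) * k (x - y) ∂μ ∂μ
      = ∫⁻ x, ((∫⁻ y, f x * k (x - y) ∂μ) + ∫⁻ y, f y * k (x - y) ∂μ) ∂μ := by
        simp only [add_mul]
        exact lintegral_congr fun x ↦ lintegral_add_left (by fun_prop) _
    _ = 2 * ((∫⁻ x, f x ∂μ) * ∫⁻ z, k z ∂μ) := by
        rw [lintegral_add_left (Measurable.lintegral_prod_right (by fun_prop)), h_left, h_right,
          two_mul]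

lemma integrableOn_Ioi_min_one_rpow_mul_rpow {s p : ℝ} (hs : 0 < s) (hsp : s < p) :
    IntegrableOn (fun t : ℝ ↦ min 1 t ^ p * t ^ (-s - 1)) (Ioi 0) := by
  rw [← Ioo_union_Ici_eq_Ioi zero_lt_one, integrableOn_union, integrableOn_Ici_iff_integrableOn_Ioi]
  constructor
  · have h_near : IntegrableOn (fun t : ℝ ↦ t ^ (p + (-s - 1))) (Ioo 0 1) := by
      rw [intervalIntegral.integrableOn_Ioo_rpow_iff zero_lt_one]
      linarith
    refine h_near.congr_fun (fun t ht ↦ ?_) measurableSet_Ioo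
    simp only [min_eq_right ht.2.le, Real.rpow_add ht.1]
  · have h_far : IntegrableOn (fun t : ℝ ↦ t ^ (-s - 1)) (Ioi 1) :=
      integrableOn_Ioi_rpow_of_lt (by linarith) zero_lt_one
    refine h_far.congr_fun (fun t ht ↦ ?_) measurableSet_Ioi
    simp only [min_eq_left (mem_Ioi.mp ht).le, Real.one_rpow, one_mul]

variable {E : Type*} [NormedAddCommGroup E]

lemma besovEnergy_comp_sub_right [MeasurableSpace E] [BorelSpace E] (μ : Measure E)
    [μ.IsAddHaarMeasure] (s p : ℝ) (u : E → ℝ) (a : E) :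
    besovEnergy μ s p univ (fun x ↦ u (x - a)) = besovEnergy μ s p univ u := by
  have h_shift (x y : E) :
      besovIntegrand μ s p (fun x ↦ u (x - a)) x y = besovIntegrand μ s p u (x - a) (y - a) := by
    simp only [besovIntegrand, dist_sub_right, Measure.addHaar_ball_center]
  simp only [besovEnergy, Measure.restrict_univ, h_shift]
  calc ∫⁻ x, ∫⁻ y, besovIntegrand μ s p u (x - a) (y - a) ∂μ ∂μ
      = ∫⁻ x, ∫⁻ y, besovIntegrand μ s p u (x - a) y ∂μ ∂μ :=
        lintegral_congr fun x ↦ lintegral_sub_right_eq_self (besovIntegrand μ s p u (x - a)) a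
    _ = ∫⁻ x, ∫⁻ y, besovIntegrand μ s p u x y ∂μ ∂μ :=
        lintegral_sub_right_eq_self (fun x ↦ ∫⁻ y, besovIntegrand μ s p u x y ∂μ) a

variable [NormedSpace ℝ E]

lemma eventually_comp_smul_sub_eq_zero {u : E → ℝ} (hu : HasCompactSupport u) {a : E} {U : Set E}
    (hU : U ∈ 𝓝 a) : ∀ᶠ c : ℝ in atTop, ∀ x ∉ U, u (c • (x - a)) = 0 := by
  obtain ⟨δ, hδ, hball⟩ := Metric.mem_nhds_iff.mp hU
  obtain ⟨R, -, hsupp⟩ := hu.isBounded.exists_pos_norm_lt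
  filter_upwards [eventually_ge_atTop (R / δ)] with c hc x hx
  have hδx : δ ≤ ‖x - a‖ := by
    rw [← dist_eq_norm]
    exact not_lt.mp fun h ↦ hx (hball h)
  have hRx : R ≤ ‖c • (x - a)‖ := by
    rw [norm_smul]
    calc R ≤ c * δ := (div_le_iff₀ hδ).mp hc
      _ ≤ ‖c‖ * ‖x - a‖ := by
        gcongr
        exact Real.le_norm_self c
  exact image_eq_zero_of_notMem_tsupport fun h ↦ (hsupp _ h).not_ge hRx

variable [FiniteDimensional ℝ E]

lemma exists_lipschitzWith_hasCompactSupport_apply_eq_one (a : E) :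
    ∃ (K : NNReal) (u : E → ℝ), LipschitzWith K u ∧ HasCompactSupport u ∧ u a = 1 := by
  let φ : ContDiffBump a := default
  obtain ⟨K, hK⟩ := ContDiff.lipschitzWith_of_hasCompactSupport φ.hasCompactSupport
    (φ.contDiff (n := 1)) one_ne_zero
  exact ⟨K, φ, hK, φ.hasCompactSupport, φ.one_of_mem_closedBall (mem_closedBall_self φ.rIn_pos.le)⟩

variable [MeasurableSpace E] [BorelSpace E] (μ : Measure E) [μ.IsAddHaarMeasure]

lemma integrable_min_one_norm_rpow_mul_norm_rpow [Nontrivial E] {s p : ℝ} (hs : 0 < s)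
    (hsp : s < p) :
    Integrable (fun z : E ↦ min 1 ‖z‖ ^ p * ‖z‖ ^ (-s - finrank ℝ E)) μ := by
  rw [integrable_fun_norm_addHaar μ (f := fun t ↦ min 1 t ^ p * t ^ (-s - finrank ℝ E))]
  refine (integrableOn_Ioi_min_one_rpow_mul_rpow hs hsp).congr_fun (fun t ht ↦ ?_)
    measurableSet_Ioi
  have h_exp : t ^ (finrank ℝ E - 1) * t ^ (-s - finrank ℝ E) = t ^ (-s - 1) := by
    rw [← Real.rpow_natCast, ← Real.rpow_add ht, Nat.cast_pred finrank_pos]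
    ring_nf
  simp only [smul_eq_mul]
  rw [mul_left_comm, h_exp]

lemma lintegral_comp_smul {c : ℝ} (hc : c ≠ 0) (f : E → ℝ≥0∞) :
    ∫⁻ x, f (c • x) ∂μ = ENNReal.ofReal |(c ^ finrank ℝ E)⁻¹| * ∫⁻ x, f x ∂μ := by
  rw [← smul_eq_mul, ← lintegral_smul_measure, ← Measure.map_addHaar_smul μ hc]
  exact (lintegral_map_equiv f (MeasurableEquiv.smul₀ c hc)).symm

lemma besovIntegrand_comp_smul (s p : ℝ) (u : E → ℝ) {c : ℝ} (hc : 0 < c) (x y : E) :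
    besovIntegrand μ s p (fun x ↦ u (c • x)) x y =
      ENNReal.ofReal (c ^ (s + finrank ℝ E)) * besovIntegrand μ s p u (c • x) (c • y) := by
  have hcs : 0 < c ^ s := Real.rpow_pos_of_pos hc s
  have h_denom : ENNReal.ofReal (dist (c • x) (c • y) ^ s) *
        μ (ball (c • x) (dist (c • x) (c • y))) =
      ENNReal.ofReal (c ^ (s + finrank ℝ E)) *
        (ENNReal.ofReal (dist x y ^ s) * μ (ball x (dist x y))) := by
    rw [dist_smul₀, Real.norm_of_nonneg hc.le, Measure.addHaar_ball_mul_of_pos μ _ hc,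
      Measure.addHaar_ball_center μ x, Real.mul_rpow hc.le dist_nonneg, Real.rpow_add hc,
      Real.rpow_natCast, ENNReal.ofReal_mul hcs.le, ENNReal.ofReal_mul hcs.le]
    ring
  rw [besovIntegrand, besovIntegrand, h_denom, ← mul_div_assoc,
    ENNReal.mul_div_mul_left _ _ (ENNReal.ofReal_pos.mpr (by positivity)).ne' ofReal_ne_top]

lemma besovEnergy_comp_smul (s p : ℝ) (u : E → ℝ) {c : ℝ} (hc : 0 < c) :
    besovEnergy μ s p univ (fun x ↦ u (c • x)) =
      ENNReal.ofReal (c ^ (s - finrank ℝ E)) * besovEnergy μ s p univ u := by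
  have h_const : c ^ (s - finrank ℝ E) =
      c ^ (s + finrank ℝ E) * (|(c ^ finrank ℝ E)⁻¹| * |(c ^ finrank ℝ E)⁻¹|) := by
    rw [abs_of_pos (by positivity), Real.rpow_sub hc, Real.rpow_add hc, Real.rpow_natCast]
    field_simp
  have h_inner (x : E) : ∫⁻ y, besovIntegrand μ s p (fun x ↦ u (c • x)) x y ∂μ =
      ENNReal.ofReal (c ^ (s + finrank ℝ E)) * (ENNReal.ofReal |(c ^ finrank ℝ E)⁻¹| *
        ∫⁻ y, besovIntegrand μ s p u (c • x) y ∂μ) := by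
    simp only [besovIntegrand_comp_smul μ s p u hc]
    rw [lintegral_const_mul' _ _ ofReal_ne_top,
      lintegral_comp_smul μ hc.ne' (besovIntegrand μ s p u (c • x))]
  simp only [besovEnergy, Measure.restrict_univ, h_inner]
  rw [lintegral_const_mul' _ _ ofReal_ne_top, lintegral_const_mul' _ _ ofReal_ne_top,
    lintegral_comp_smul μ hc.ne' (fun x ↦ ∫⁻ y, besovIntegrand μ s p u x y ∂μ), h_const,
    ENNReal.ofReal_mul (by positivity), ENNReal.ofReal_mul (abs_nonneg _)]
  ring

lemma besovIntegrand_le_of_abs_sub_le {s p : ℝ} (hp : 0 < p) {u : E → ℝ} {C : ℝ} (hC : 0 ≤ C)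
    {x y : E} (hu : |u x - u y| ≤ C * min 1 (dist x y)) :
    besovIntegrand μ s p u x y ≤ ENNReal.ofReal (C ^ p) / μ (ball 0 1) *
      ENNReal.ofReal (min 1 ‖x - y‖ ^ p * ‖x - y‖ ^ (-s - finrank ℝ E)) := by
  rcases eq_or_ne x y with rfl | hxy
  · simp [besovIntegrand, Real.zero_rpow hp.ne']
  have hd : 0 < dist x y := dist_pos.mpr hxy
  have h_denom : ENNReal.ofReal (dist x y ^ s) * μ (ball x (dist x y)) =
      ENNReal.ofReal (dist x y ^ (s + finrank ℝ E)) * μ (ball 0 1) := by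
    rw [Measure.addHaar_ball_of_pos μ x hd, ← mul_assoc, ← ENNReal.ofReal_mul (by positivity),
      Real.rpow_add hd, Real.rpow_natCast]
  calc besovIntegrand μ s p u x y
      ≤ ENNReal.ofReal ((C * min 1 (dist x y)) ^ p) /
          (ENNReal.ofReal (dist x y ^ (s + finrank ℝ E)) * μ (ball 0 1)) := by
        rw [besovIntegrand, h_denom]
        gcongr
    _ = _ := by
        rw [← dist_eq_norm, ← neg_add', Real.rpow_neg hd.le, Real.mul_rpow hC (by positivity),
          ENNReal.ofReal_mul (by positivity), ENNReal.ofReal_mul (by positivity),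
          ENNReal.ofReal_inv_of_pos (by positivity), div_eq_mul_inv, div_eq_mul_inv,
          ENNReal.mul_inv (.inr measure_ball_lt_top.ne) (.inl ofReal_ne_top)]
        ring

lemma besovIntegrand_le_indicator_add_mul {s p : ℝ} (hp : 0 < p) {u : E → ℝ} {C : ℝ} (hC : 0 ≤ C)
    (hu : ∀ x y, |u x - u y| ≤ C * min 1 (dist x y)) (x y : E) :
    besovIntegrand μ s p u x y ≤ ENNReal.ofReal (C ^ p) / μ (ball 0 1) *
      (((tsupport u).indicator 1 x + (tsupport u).indicator 1 y) *
        ENNReal.ofReal (min 1 ‖x - y‖ ^ p * ‖x - y‖ ^ (-s - finrank ℝ E))) := by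
  by_cases hxy : x ∈ tsupport u ∨ y ∈ tsupport u
  · have h_one : (1 : ℝ≥0∞) ≤ (tsupport u).indicator 1 x + (tsupport u).indicator 1 y := by
      rcases hxy with h | h <;> simp [h]
    exact (besovIntegrand_le_of_abs_sub_le μ hp hC (hu x y)).trans
      (mul_le_mul_right (le_mul_of_one_le_left' h_one) _)
  · obtain ⟨hx, hy⟩ := not_or.mp hxy
    have h_eq : u x = u y := by
      rw [image_eq_zero_of_notMem_tsupport hx, image_eq_zero_of_notMem_tsupport hy]
    simp only [besovIntegrand_of_eq μ s hp.ne' h_eq, zero_le]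

lemma besovEnergy_univ_lt_top [Nontrivial E] {s p : ℝ} (hs : 0 < s) (hsp : s < p) {u : E → ℝ}
    {K : NNReal} (hu : LipschitzWith K u) (hu_supp : HasCompactSupport u) :
    besovEnergy μ s p univ u < ∞ := by
  obtain ⟨M, hM⟩ := hu_supp.exists_bound_of_continuous hu.continuous
  set D : ℝ≥0∞ := ENNReal.ofReal (max (K : ℝ) (2 * M) ^ p) / μ (ball 0 1)
  set f : E → ℝ≥0∞ := (tsupport u).indicator 1
  set k : E → ℝ≥0∞ := fun z ↦ ENNReal.ofReal (min 1 ‖z‖ ^ p * ‖z‖ ^ (-s - finrank ℝ E))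
  have h_le (x y : E) : besovIntegrand μ s p u x y ≤ D * ((f x + f y) * k (x - y)) :=
    besovIntegrand_le_indicator_add_mul μ (hs.trans hsp) (le_max_of_le_left K.coe_nonneg)
      (abs_sub_le_max_mul_min_one_dist hu hM) x y
  have hD : D ≠ ∞ := div_ne_top ofReal_ne_top (measure_ball_pos μ 0 one_pos).ne'
  have hf : Measurable f := measurable_one.indicator (isClosed_tsupport u).measurableSet
  have hf_int : ∫⁻ x, f x ∂μ ≠ ∞ := by
    rw [lintegral_indicator_one (isClosed_tsupport u).measurableSet]
    exact hu_supp.isCompact.measure_ne_top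
  have hk_int : ∫⁻ z, k z ∂μ ≠ ∞ :=
    (integrable_min_one_norm_rpow_mul_norm_rpow μ hs hsp).lintegral_lt_top.ne
  calc besovEnergy μ s p univ u
      ≤ ∫⁻ x, ∫⁻ y, D * ((f x + f y) * k (x - y)) ∂μ ∂μ := by
        simp only [besovEnergy, Measure.restrict_univ]
        exact lintegral_mono fun x ↦ lintegral_mono (h_le x)
    _ = D * (2 * ((∫⁻ x, f x ∂μ) * ∫⁻ z, k z ∂μ)) := by
        simp only [lintegral_const_mul' D _ hD]
        rw [lintegral_lintegral_add_mul_comp_sub μ hf (by fun_prop)]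
    _ < ∞ := by finiteness

lemma tendsto_besovEnergy_comp_smul_sub {s p : ℝ} (hsd : s < finrank ℝ E) {u : E → ℝ}
    (hu : besovEnergy μ s p univ u ≠ ∞) (a : E) :
    Tendsto (fun c : ℝ ↦ besovEnergy μ s p univ fun x ↦ u (c • (x - a))) atTop (𝓝 0) := by
  have h_pow : Tendsto (fun c : ℝ ↦ c ^ (s - finrank ℝ E)) atTop (𝓝 0) := by
    simpa only [neg_sub] using tendsto_rpow_neg_atTop (sub_pos.mpr hsd)
  have h_lim := ENNReal.Tendsto.mul_const (ENNReal.tendsto_ofReal h_pow) (.inr hu)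
  rw [ENNReal.ofReal_zero, zero_mul] at h_lim
  refine h_lim.congr' ?_
  filter_upwards [eventually_gt_atTop 0] with c hc
  rw [besovEnergy_comp_sub_right μ s p (fun x ↦ u (c • x)) a, besovEnergy_comp_smul μ s p u hc]

theorem frac_capacity_of_point_eq_zero_general {s p : ℝ} (hs : 0 < s) (hsp : s < p)
    (hsd : s < finrank ℝ E) {a : E} {U : Set E} (hU : U ∈ 𝓝 a) (B : Set E) :
    ⨅ u : {u : E → ℝ // Continuous u ∧ 1 ≤ u a ∧ ∀ x ∉ U, u x = 0}, besovEnergy μ s p B u = 0 := by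
  have : Nontrivial E := nontrivial_of_finrank_pos (R := ℝ) (by exact_mod_cast hs.trans hsd)
  obtain ⟨K, u, hu_lip, hu_supp, hu_one⟩ :=
    exists_lipschitzWith_hasCompactSupport_apply_eq_one (0 : E)
  have h_lim : Tendsto (fun c : ℝ ↦ besovEnergy μ s p univ fun x ↦ u (c • (x - a))) atTop (𝓝 0) :=
    tendsto_besovEnergy_comp_smul_sub μ hsd (besovEnergy_univ_lt_top μ hs hsp hu_lip hu_supp).ne a
  refine le_antisymm (ge_of_tendsto h_lim ?_) zero_le
  filter_upwards [eventually_comp_smul_sub_eq_zero hu_supp hU] with c hc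
  have h_cont : Continuous fun x ↦ u (c • (x - a)) := hu_lip.continuous.comp (by fun_prop)
  have h_one : 1 ≤ u (c • (a - a)) := by rw [sub_self, smul_zero, hu_one]
  exact iInf_le_of_le ⟨fun x ↦ u (c • (x - a)), h_cont, h_one, hc⟩
    (besovEnergy_mono μ s p _ (subset_univ B))

end BesovEnergy

/-- The fractional relative `(θ,p)`-capacity of the point `{0}` in `ℝⁿ` vanishes when
`θp < n`: the infimum over all continuous `u : ℝⁿ → ℝ` with `u(0) ≥ 1` and `u = 0`
outside `B(0,2r)` of the Besov energy over `B(0,Λr) × B(0,Λr)` equals `0`. -/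
theorem frac_capacity_of_point_eq_zero (n : ℕ) (hn : 1 ≤ n)
    (θ p : ℝ) (hθ₀ : 0 < θ) (hθ₁ : θ < 1) (hp : 1 < p) (hθpn : θ * p < n)
    (Λ r : ℝ) (hΛ : 2 < Λ) (hr : 0 < r) :
    ⨅ u : {u : EuclideanSpace ℝ (Fin n) → ℝ // Continuous u ∧ 1 ≤ u 0 ∧
        ∀ x ∉ ball (0 : EuclideanSpace ℝ (Fin n)) (2 * r), u x = 0},
      ∫⁻ x in ball (0 : EuclideanSpace ℝ (Fin n)) (Λ * r),
        ∫⁻ y in ball (0 : EuclideanSpace ℝ (Fin n)) (Λ * r),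
          ENNReal.ofReal (|u.1 x - u.1 y| ^ p) /
            (ENNReal.ofReal (dist x y ^ (θ * p)) * volume (ball x (dist x y)))
          ∂volume ∂volume = 0 := by
  exact frac_capacity_of_point_eq_zero_general volume (by positivity)
    (mul_lt_of_lt_one_left (by positivity) hθ₁) (by simpa using hθpn)
    (ball_mem_nhds 0 (by positivity)) _
end
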